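/- arXiv:2405.12064 — 4 statements merged into one kernel-verified Lean document; each statement's English description precedes it below -/
import Mathlib

section
/- Fix half-bandwidths W⁰, W¹ ∈ (0, 1/2), let 𝕎 = [−W⁰, W⁰] × [−W¹, W¹], and fix ε ∈ (0, 1/(4W⁰W¹) − 1). Then there exist constants C̄₃ > 0, C̄₄ > 0 and integers M̄₂, N̄₂ ≥ 1 (depending only on W⁰, W¹ and ε) such that for all M ≥ M̄₂, N ≥ N̄₂ and every index p with ⌈4MN·W⁰·W¹·(1+ε)⌉ ≤ p ≤ MN−1, the p-th eigenvalue satisfies λ_{(M,N),𝕎}^{(p)} ≤ C̄₃·e^{−C̄₄·min(M,N)}. -/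
open MeasureTheory Matrix Real Set

/-- The 2-D prolate matrix `B_{(M,N),𝕎}`, indexed by pairs, with entries
`∫_𝕎 exp(2πi (f (m−p) + g (n−q))) df dg`. -/
noncomputable def prolate2D (M N : ℕ) (𝕎 : Set (ℝ × ℝ)) :
    Matrix (Fin M × Fin N) (Fin M × Fin N) ℂ :=
  fun i j => ∫ fg in 𝕎,
    Complex.exp (2 * (Real.pi : ℂ) * Complex.I *
      ((fg.1 : ℂ) * (((i.1 : ℕ) : ℂ) - ((j.1 : ℕ) : ℂ)) +
       (fg.2 : ℂ) * (((i.2 : ℕ) : ℂ) - ((j.2 : ℕ) : ℂ))))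


lemma interp_bound (L : ℕ) (hL : 0 < L) (ζ : ℂ) (hζ : IsPrimitiveRoot ζ L) (hζn : ‖ζ‖ = 1)
    (p : Polynomial ℂ) (hp : p.natDegree < L) (z : ℂ) (hz : ‖z‖ = 1) :
    ‖p.eval z‖ ≤ ∑ j ∈ Finset.range L, ‖p.eval (ζ ^ j)‖ := by
  have hζ0 : ζ ≠ 0 := by
    intro h; simp [h] at hζn
  have hL' : (L : ℂ) ≠ 0 := by exact_mod_cast hL.ne'
  have orth : ∀ n < L, ∀ a < L, ∑ j ∈ Finset.range L, (ζ ^ j) ^ n * ((ζ ^ j)⁻¹) ^ a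
      = if n = a then (L : ℂ) else 0 := by
    intro n hn a ha
    have e1 : ∀ j, (ζ ^ j) ^ n * ((ζ ^ j)⁻¹) ^ a = (ζ ^ n / ζ ^ a) ^ j := by
      intro j
      rw [div_pow, inv_pow, ← pow_mul, ← pow_mul, ← pow_mul, ← pow_mul, mul_comm j n, mul_comm j a]
      rfl
    simp_rw [e1]
    split_ifs with h
    · subst h
      simp [div_self (pow_ne_zero n hζ0)]
    · have hne : ζ ^ n / ζ ^ a ≠ 1 := by
        intro h1
        rw [div_eq_one_iff_eq (pow_ne_zero a hζ0)] at h1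
        exact h (hζ.pow_inj hn ha h1)
      rw [geom_sum_eq hne, div_pow, ← pow_mul, ← pow_mul, mul_comm n, mul_comm a, pow_mul, pow_mul,
        hζ.pow_eq_one]
      simp
  have key : (L : ℂ) * p.eval z = ∑ j ∈ Finset.range L, p.eval (ζ ^ j) *
      ∑ a ∈ Finset.range L, z ^ a * ((ζ ^ j)⁻¹) ^ a := by
    have e2 : ∀ w : ℂ, p.eval w = ∑ n ∈ Finset.range L, p.coeff n * w ^ n := fun w =>
      Polynomial.eval_eq_sum_range' hp w
    have e3 : ∀ j, p.eval (ζ ^ j) * ∑ a ∈ Finset.range L, z ^ a * ((ζ ^ j)⁻¹) ^ a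
        = ∑ n ∈ Finset.range L, ∑ a ∈ Finset.range L,
          p.coeff n * z ^ a * ((ζ ^ j) ^ n * ((ζ ^ j)⁻¹) ^ a) := by
      intro j
      rw [e2, Finset.sum_mul_sum]
      refine Finset.sum_congr rfl fun n _ => Finset.sum_congr rfl fun a _ => by ring
    simp_rw [e3]
    rw [Finset.sum_comm]
    rw [e2, Finset.mul_sum]
    refine Finset.sum_congr rfl fun n hn => ?_
    rw [Finset.sum_comm]
    simp_rw [← Finset.mul_sum]
    rw [Finset.sum_eq_single n]
    · rw [orth n (Finset.mem_range.1 hn) n (Finset.mem_range.1 hn)]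
      simp; ring
    · intro a ha hne
      rw [orth n (Finset.mem_range.1 hn) a (Finset.mem_range.1 ha)]
      simp [hne.symm]
    · intro h; exact absurd hn h
  have h1 : (L : ℝ) * ‖p.eval z‖ ≤ L * ∑ j ∈ Finset.range L, ‖p.eval (ζ ^ j)‖ := by
    calc (L : ℝ) * ‖p.eval z‖ = ‖(L : ℂ) * p.eval z‖ := by simp
      _ ≤ ∑ j ∈ Finset.range L, ‖p.eval (ζ ^ j)‖ * L := by
        rw [key]
        refine norm_sum_le_of_le _ fun j _ => ?_
        rw [norm_mul]
        refine mul_le_mul_of_nonneg_left ?_ (norm_nonneg _)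
        refine (norm_sum_le _ _).trans ?_
        simp [hz, hζn]
      _ = _ := by rw [← Finset.sum_mul, mul_comm]
  exact le_of_mul_le_mul_left h1 (by exact_mod_cast hL)

open Polynomial in
lemma far_bound (M L k r : ℕ) (hk : 0 < k) (hM : 0 < M) (hL : M + r * k ≤ L) (ζ : ℂ)
    (hζ : IsPrimitiveRoot ζ L) (hζn : ‖ζ‖ = 1) (J : Finset ℕ) (z : ℂ) (hz : ‖z‖ = 1)
    (hfar : ∀ j < L, j ∉ J → 4 / (k : ℝ) ≤ ‖ζ ^ j - z‖)
    (x : Fin M → ℂ) (hx : ∀ j ∈ J, ∑ m, x m * (ζ ^ j) ^ (m : ℕ) = 0) :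
    ‖∑ m, x m * z ^ (m : ℕ)‖ ≤ L * (1 / 2) ^ r * ∑ m, ‖x m‖ := by
  have hz0 : z ≠ 0 := by
    intro h; simp [h] at hz
  have hk' : (k : ℂ) ≠ 0 := by exact_mod_cast hk.ne'
  have hkr : (0 : ℝ) < k := by exact_mod_cast hk
  set P : ℂ[X] := ∑ m : Fin M, C (x m) * X ^ (m : ℕ) with hP
  set G : ℂ[X] := ∑ a ∈ Finset.range k, C ((k : ℂ)⁻¹ * (z⁻¹) ^ a) * X ^ a with hG
  have evP : ∀ w, P.eval w = ∑ m, x m * w ^ (m : ℕ) := by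
    intro w; simp [hP, eval_finsetSum]
  have evG : ∀ w, G.eval w = (k : ℂ)⁻¹ * ∑ a ∈ Finset.range k, (w / z) ^ a := by
    intro w
    simp only [hG, eval_finsetSum, Finset.mul_sum, eval_mul, eval_C, eval_pow, eval_X]
    refine Finset.sum_congr rfl fun a _ => ?_
    rw [div_eq_mul_inv, mul_pow]; ring
  have dP : P.natDegree ≤ M - 1 := by
    refine natDegree_sum_le_of_forall_le _ _ fun m _ => ?_
    exact (natDegree_C_mul_X_pow_le _ _).trans (by omega)
  have dG : G.natDegree ≤ k := by
    refine natDegree_sum_le_of_forall_le _ _ fun m hm => ?_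
    exact (natDegree_C_mul_X_pow_le _ _).trans (Finset.mem_range.1 hm).le
  have dPG : (P * G ^ r).natDegree < L := by
    have h1 := natDegree_mul_le (p := P) (q := G ^ r)
    have h2 := natDegree_pow_le_of_le r dG
    omega
  have h := interp_bound L (by omega) ζ hζ hζn (P * G ^ r) dPG z hz
  have hGz : G.eval z = 1 := by
    rw [evG, div_self hz0]; simp [hk']
  rw [eval_mul, eval_pow, hGz, one_pow, mul_one, evP] at h
  refine h.trans ?_
  have : ∀ j ∈ Finset.range L, ‖(P * G ^ r).eval (ζ ^ j)‖ ≤ (1 / 2) ^ r * ∑ m, ‖x m‖ := by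
    intro j hj
    rw [eval_mul, eval_pow, evP]
    by_cases hjJ : j ∈ J
    · rw [hx j hjJ]; simp; positivity
    · have hf := hfar j (Finset.mem_range.1 hj) hjJ
      rw [norm_mul, norm_pow, mul_comm]
      have hg : ‖G.eval (ζ ^ j)‖ ≤ 1 / 2 := by
        have hd : 4 / (k : ℝ) ≤ ‖ζ ^ j / z - 1‖ := by
          have : ζ ^ j / z - 1 = (ζ ^ j - z) / z := by field_simp
          rw [this, norm_div, hz, div_one]; exact hf
        have hne : ζ ^ j / z ≠ 1 := by
          intro h1
          rw [h1] at hd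
          have : 0 < 4 / (k : ℝ) := by positivity
          simp at hd; linarith
        rw [evG, geom_sum_eq hne, norm_mul, norm_div, norm_inv, Complex.norm_natCast]
        have hn : ‖(ζ ^ j / z) ^ k - 1‖ ≤ 2 := by
          refine (norm_sub_le _ _).trans ?_
          simp [hz, hζn]; norm_num
        calc (k : ℝ)⁻¹ * (‖(ζ ^ j / z) ^ k - 1‖ / ‖ζ ^ j / z - 1‖) ≤ (k : ℝ)⁻¹ * (2 / (4 / k)) := by
              gcongr
          _ = 1 / 2 := by field_simp; norm_num
      gcongr
      refine norm_sum_le_of_le _ fun m _ => ?_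
      simp [hζn]
  refine (Finset.sum_le_sum this).trans ?_
  simp [mul_assoc]

noncomputable def ee (t : ℝ) : ℂ := Complex.exp (2 * (Real.pi : ℂ) * Complex.I * t)

lemma ee_norm (t : ℝ) : ‖ee t‖ = 1 := by
  have : 2 * (Real.pi : ℂ) * Complex.I * t = ((2 * Real.pi * t : ℝ) : ℂ) * Complex.I := by
    push_cast; ring
  rw [ee, this, Complex.norm_exp_ofReal_mul_I]

lemma ee_add (s t : ℝ) : ee (s + t) = ee s * ee t := by
  simp only [ee, ← Complex.exp_add]; congr 1; push_cast; ring

lemma ee_nat (t : ℝ) (n : ℕ) : ee t ^ n = ee (n * t) := by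
  simp only [ee, ← Complex.exp_nat_mul]; congr 1; push_cast; ring

lemma ee_conj (t : ℝ) : star (ee t) = ee (-t) := by
  rw [ee, ee, Complex.star_def, ← Complex.exp_conj]; congr 1; simp [Complex.conj_ofNat]

lemma ee_sub_norm (s t : ℝ) : ‖ee s - ee t‖ = 2 * |Real.sin (Real.pi * (s - t))| := by
  have h1 : ee s - ee t = ee t * (Complex.exp (Complex.I * ((2 * Real.pi * (s - t) : ℝ) : ℂ)) - 1) := by
    have : ee s = ee t * ee (s - t) := by rw [← ee_add]; congr 1; ring
    rw [this, mul_sub, mul_one, ee, ee]; congr 3; push_cast; ring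
  rw [h1, norm_mul, ee_norm, one_mul, Complex.norm_exp_I_mul_ofReal_sub_one]
  rw [Real.norm_eq_abs, abs_mul, abs_two]; congr 3; ring

lemma far_sep (k : ℕ) (hk : 2 ≤ k) (s t : ℝ) (h1 : 1 / (k : ℝ) ≤ s - t) (h2 : s - t ≤ 1 - 1 / (k : ℝ)) :
    4 / (k : ℝ) ≤ ‖ee s - ee t‖ := by
  rw [ee_sub_norm]
  have hk' : (2 : ℝ) ≤ k := by exact_mod_cast hk
  have hk2 : 1 / (k : ℝ) ≤ 1 / 2 := by gcongr
  have hk0 : 0 < 1 / (k : ℝ) := by positivity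
  have pp := Real.pi_pos
  have : 2 * (1 / (k : ℝ)) ≤ Real.sin (Real.pi * (s - t)) := by
    rcases le_total (s - t) (1 / 2) with h | h
    · have := Real.mul_le_sin (x := Real.pi * (s - t)) (by nlinarith) (by nlinarith)
      refine le_trans ?_ this
      have : 2 / Real.pi * (Real.pi * (s - t)) = 2 * (s - t) := by field_simp
      rw [this]; linarith
    · have := Real.mul_le_sin (x := Real.pi * (1 - (s - t))) (by nlinarith) (by nlinarith)
      have e : Real.sin (Real.pi * (1 - (s - t))) = Real.sin (Real.pi * (s - t)) := by
        rw [← Real.sin_pi_sub]; congr 1; ring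
      rw [e] at this
      refine le_trans ?_ this
      have : 2 / Real.pi * (Real.pi * (1 - (s - t))) = 2 * (1 - (s - t)) := by field_simp
      rw [this]; linarith
  have h3 := le_abs_self (Real.sin (Real.pi * (s - t)))
  have : 4 / (k : ℝ) = 2 * (2 * (1 / k)) := by ring
  linarith

lemma ee_prim (L : ℕ) (hL : 0 < L) : IsPrimitiveRoot (ee (1 / L)) L := by
  have := Complex.isPrimitiveRoot_exp L hL.ne'
  convert this using 1
  rw [ee]; congr 1; push_cast; ring

noncomputable def nearSet (L : ℕ) (w : ℝ) : Finset ℕ :=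
  (Finset.range L).filter fun j => (j : ℝ) ≤ w * L ∨ (L : ℝ) - w * L ≤ j

lemma nearSet_card (L : ℕ) (w : ℝ) (hw : 0 ≤ w) : ((nearSet L w).card : ℝ) ≤ 2 * w * L + 2 := by
  have hsub : nearSet L w ⊆ Finset.range (⌊w * L⌋₊ + 1) ∪
      (Finset.range (⌊w * L⌋₊ + 1)).image (fun i => L - i) := by
    intro j hj
    simp only [nearSet, Finset.mem_filter, Finset.mem_range] at hj
    simp only [Finset.mem_union, Finset.mem_range, Finset.mem_image]
    rcases hj with ⟨hj, h | h⟩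
    · left; exact Nat.lt_succ_of_le (Nat.le_floor h)
    · right
      refine ⟨L - j, Nat.lt_succ_of_le (Nat.le_floor ?_), by omega⟩
      rw [Nat.cast_sub hj.le]; linarith
  have h1 := (Finset.card_le_card hsub).trans (Finset.card_union_le _ _)
  have h2 : ((Finset.range (⌊w * L⌋₊ + 1)).image (fun i => L - i)).card ≤ ⌊w * L⌋₊ + 1 :=
    Finset.card_image_le.trans (by simp)
  rw [Finset.card_range] at h1
  have h3 : (nearSet L w).card ≤ 2 * ⌊w * L⌋₊ + 2 := by omega
  have h4 : ((nearSet L w).card : ℝ) ≤ 2 * (⌊w * L⌋₊ : ℝ) + 2 := by exact_mod_cast h3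
  have h5 := Nat.floor_le (a := w * L) (by positivity)
  linarith

lemma arc_bound (M k r : ℕ) (hk : 2 ≤ k) (hM : 0 < M) (W : ℝ) 
    (x : Fin M → ℂ) (hx : ∀ j ∈ nearSet (M + r * k) (W + 1 / k),
      ∑ m, x m * (ee (1 / ((M + r * k : ℕ) : ℝ)) ^ j) ^ (m : ℕ) = 0) (f : ℝ) (hf : f ∈ Icc (-W) W) :
    ‖∑ m, x m * ee f ^ (m : ℕ)‖ ≤ ((M + r * k : ℕ) : ℝ) * (1 / 2) ^ r * ∑ m, ‖x m‖ := by
  have hL : 0 < M + r * k := by omega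
  set L := M + r * k with hLdef
  have hLr : (0 : ℝ) < L := by exact_mod_cast hL
  refine far_bound M L k r (by omega) hM le_rfl _ (ee_prim L hL) (ee_norm _) _ _ (ee_norm _) ?_ x hx
  intro j hj hjJ
  simp only [nearSet, Finset.mem_filter, Finset.mem_range, not_and, not_or, not_le] at hjJ
  obtain ⟨h1, h2⟩ := hjJ hj
  rw [ee_nat]
  rw [← lt_div_iff₀ hLr] at h1
  have h2' : (j : ℝ) / L < 1 - (W + 1 / k) := by
    rw [div_lt_iff₀ hLr]; linarith
  have e : (j : ℝ) * (1 / L) = j / L := by ring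
  refine far_sep k hk _ _ ?_ ?_ <;> rw [e] <;> linarith [hf.1, hf.2]

lemma spec_decomp {n : Type*} [Fintype n] [DecidableEq n] {B : Matrix n n ℂ} (hB : B.IsHermitian) :
    ∃ U : Matrix n n ℂ, Uᴴ * U = 1 ∧
      B = U * diagonal (fun i => (hB.eigenvalues i : ℂ)) * Uᴴ := by
  refine ⟨hB.eigenvectorUnitary, ?_, ?_⟩
  · rw [← star_eq_conjTranspose]; exact Unitary.coe_star_mul_self _
  · conv_lhs => rw [hB.spectral_theorem]
    rw [Unitary.conjStarAlgAut_apply, ← star_eq_conjTranspose]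
    rfl

lemma dot_star_self {n : Type*} [Fintype n] (c : n → ℂ) :
    star c ⬝ᵥ c = ((∑ i, ‖c i‖ ^ 2 : ℝ) : ℂ) := by
  simp only [dotProduct, Pi.star_apply]
  push_cast
  refine Finset.sum_congr rfl fun i _ => ?_
  rw [Complex.star_def, Complex.conj_mul']

lemma quad_decomp {n : Type*} [Fintype n] [DecidableEq n] {U : Matrix n n ℂ} (hU : Uᴴ * U = 1)
    (d : n → ℝ) (c : n → ℂ) :
    (star (U *ᵥ c) ⬝ᵥ ((U * diagonal (fun i => (d i : ℂ)) * Uᴴ) *ᵥ (U *ᵥ c))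
      = ((∑ i, d i * ‖c i‖ ^ 2 : ℝ) : ℂ)) ∧ ∑ i, ‖(U *ᵥ c) i‖ ^ 2 = ∑ i, ‖c i‖ ^ 2 := by
  constructor
  · rw [mulVec_mulVec, Matrix.mul_assoc, hU, Matrix.mul_one, ← mulVec_mulVec, star_mulVec,
      ← dotProduct_mulVec, mulVec_mulVec, hU, one_mulVec]
    simp only [dotProduct, Pi.star_apply, mulVec_diagonal]
    push_cast
    refine Finset.sum_congr rfl fun i _ => ?_
    rw [← Complex.conj_mul', Complex.star_def]; ring
  · have := dot_star_self (U *ᵥ c)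
    rw [star_mulVec, ← dotProduct_mulVec, mulVec_mulVec, hU, one_mulVec, dot_star_self] at this
    exact_mod_cast this.symm

lemma count_eig {n J : Type*} [Fintype n] [DecidableEq n] [Fintype J] {B : Matrix n n ℂ}
    (hB : B.IsHermitian) (l : J → (n → ℂ) →ₗ[ℂ] ℂ) (η : ℝ)
    (h : ∀ x : n → ℂ, (∀ j, l j x = 0) → (star x ⬝ᵥ B *ᵥ x).re ≤ η * ∑ i, ‖x i‖ ^ 2) :
    (Finset.univ.filter fun i => η < hB.eigenvalues i).card ≤ Fintype.card J := by
  obtain ⟨U, hU, hBU⟩ := spec_decomp hB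
  set d := hB.eigenvalues with hd
  by_contra hcon
  push Not at hcon
  let T : (n → ℂ) →ₗ[ℂ] ((J ⊕ {i // ¬ η < d i}) → ℂ) :=
    LinearMap.pi (fun s => Sum.elim (fun j => l j ∘ₗ U.mulVecLin) (fun i => LinearMap.proj i.1) s)
  have hT : LinearMap.ker T ≠ ⊥ := by
    apply LinearMap.ker_ne_bot_of_finrank_lt
    rw [Module.finrank_fintype_fun_eq_card, Module.finrank_fintype_fun_eq_card, Fintype.card_sum,
      Fintype.card_subtype]
    have := Finset.card_filter_add_card_filter_not (s := (Finset.univ : Finset n)) (fun i => η < d i)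
    rw [Finset.card_univ] at this
    omega
  obtain ⟨c, hc, hc0⟩ := Submodule.exists_mem_ne_zero_of_ne_bot hT
  rw [LinearMap.mem_ker] at hc
  have h1 : ∀ j, l j (U *ᵥ c) = 0 := fun j => congrFun hc (Sum.inl j)
  have h2 : ∀ i, ¬ η < d i → c i = 0 := fun i hi => congrFun hc (Sum.inr ⟨i, hi⟩)
  have h3 := h _ h1
  obtain ⟨q1, q2⟩ := quad_decomp hU d c
  rw [← hBU] at q1
  rw [q1, q2, Complex.ofReal_re, Finset.mul_sum] at h3
  obtain ⟨i, hi⟩ := Function.ne_iff.1 hc0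
  refine absurd h3 (not_le.2 (Finset.sum_lt_sum (fun i _ => ?_) ⟨i, Finset.mem_univ _, ?_⟩))
  · by_cases hi : η < d i
    · gcongr
    · simp [h2 i hi]
  · have : η < d i := by
      by_contra h'; exact hi (h2 i h')
    have : 0 < ‖c i‖ := norm_pos_iff.2 hi
    gcongr

lemma eig_bounds {n : Type*} [Fintype n] [DecidableEq n] {B : Matrix n n ℂ}
    (hB : B.IsHermitian) (h0 : ∀ x, 0 ≤ (star x ⬝ᵥ B *ᵥ x).re)
    (h1 : ∀ x, (star x ⬝ᵥ B *ᵥ x).re ≤ ∑ i, ‖x i‖ ^ 2) (i : n) :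
    0 ≤ hB.eigenvalues i ∧ hB.eigenvalues i ≤ 1 := by
  obtain ⟨U, hU, hBU⟩ := spec_decomp hB
  obtain ⟨q1, q2⟩ := quad_decomp hU hB.eigenvalues (Pi.single i 1)
  rw [← hBU] at q1
  have a0 := h0 (U *ᵥ Pi.single i 1)
  have a1 := h1 (U *ᵥ Pi.single i 1)
  rw [q1, Complex.ofReal_re] at a0 a1
  rw [q2] at a1
  rw [Finset.sum_eq_single i (by intro j _ hj; simp [hj]) (by simp)] at a0 a1
  rw [Finset.sum_eq_single i (by intro j _ hj; simp [hj]) (by simp)] at a1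
  simp at a0 a1
  exact ⟨a0, a1⟩

noncomputable def prol (M : ℕ) (W : ℝ) : Matrix (Fin M) (Fin M) ℂ :=
  fun i j => ∫ f in Icc (-W) W, ee (f * ((i : ℕ) - (j : ℕ) : ℝ))

lemma ee_cont : Continuous ee := by unfold ee; fun_prop

lemma prol_herm (M : ℕ) (W : ℝ) : (prol M W).IsHermitian := by
  ext i j
  rw [conjTranspose_apply, prol, prol, Complex.star_def, ← integral_conj]
  refine integral_congr_ae (Filter.Eventually.of_forall fun f => ?_)
  show star (ee _) = _
  rw [ee_conj]; congr 1; ring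

lemma prol_quad (M : ℕ) (W : ℝ) (x : Fin M → ℂ) :
    (star x ⬝ᵥ prol M W *ᵥ x).re = ∫ f in Icc (-W) W, ‖∑ m, x m * ee (-f) ^ (m : ℕ)‖ ^ 2 := by
  have : star x ⬝ᵥ prol M W *ᵥ x
      = ((∫ f in Icc (-W) W, ‖∑ m, x m * ee (-f) ^ (m : ℕ)‖ ^ 2 : ℝ) : ℂ) := by
    rw [← integral_complex_ofReal]
    have e : ∀ f : ℝ, ((‖∑ m, x m * ee (-f) ^ (m : ℕ)‖ ^ 2 : ℝ) : ℂ)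
        = ∑ i, ∑ j, star (x i) * (x j) * ee (f * ((i : ℕ) - (j : ℕ) : ℝ)) := by
      intro f
      push_cast
      rw [← Complex.conj_mul', map_sum, Finset.sum_mul_sum]
      refine Finset.sum_congr rfl fun i _ => Finset.sum_congr rfl fun j _ => ?_
      rw [map_mul, ee_nat, ee_nat, ← Complex.star_def, ee_conj]
      have : (f * ((i : ℕ) - (j : ℕ) : ℝ)) = -(((i : ℕ) : ℝ) * -f) + ((j : ℕ) : ℝ) * -f := by ring
      rw [this, ee_add]; ring
    simp_rw [e]
    have hint : ∀ i j : Fin M, Integrable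
        (fun f : ℝ => star (x i) * (x j) * ee (f * ((i : ℕ) - (j : ℕ) : ℝ)))
        (volume.restrict (Icc (-W) W)) := by
      intro i j
      have : Continuous (fun f : ℝ => star (x i) * (x j) * ee (f * ((i : ℕ) - (j : ℕ) : ℝ))) :=
        continuous_const.mul (ee_cont.comp (by fun_prop))
      exact this.continuousOn.integrableOn_Icc
    rw [integral_finsetSum _ (fun i _ => integrable_finsetSum _ fun j _ => hint i j)]
    simp only [dotProduct, mulVec, Pi.star_apply, Finset.mul_sum]
    refine Finset.sum_congr rfl fun i _ => ?_
    rw [integral_finsetSum _ (fun j _ => hint i j)]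
    refine Finset.sum_congr rfl fun j _ => ?_
    rw [integral_const_mul, prol]; ring
  rw [this, Complex.ofReal_re]

lemma prol_half (M : ℕ) : prol M (1 / 2) = 1 := by
  ext i j
  rw [prol, integral_Icc_eq_integral_Ioc, ← intervalIntegral.integral_of_le (by norm_num)]
  by_cases h : i = j
  · subst h
    simp [ee]; norm_num
  · rw [one_apply_ne h]
    set n : ℤ := (i : ℕ) - (j : ℕ) with hn
    have hn0 : n ≠ 0 := by
      intro h0; apply h; apply Fin.ext; omega
    have hc : (2 * (Real.pi : ℂ) * Complex.I * n) ≠ 0 := by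
      have := Real.pi_ne_zero
      simp [hn0, this]
    have e : ∀ f : ℝ, ee (f * ((i : ℕ) - (j : ℕ) : ℝ))
        = Complex.exp ((2 * (Real.pi : ℂ) * Complex.I * n) * f) := by
      intro f
      rw [ee, hn]; congr 1; push_cast; ring
    simp_rw [e]
    rw [integral_exp_mul_complex hc]
    have : Complex.exp (2 * (Real.pi : ℂ) * Complex.I * n * ((1 / 2 : ℝ) : ℂ))
        = Complex.exp (2 * (Real.pi : ℂ) * Complex.I * n * ((-(1 / 2) : ℝ) : ℂ)) := by
      rw [Complex.exp_eq_exp_iff_exists_int]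
      exact ⟨n, by push_cast; ring⟩
    rw [this, sub_self, zero_div]

lemma poly_int (M : ℕ) (W : ℝ) (x : Fin M → ℂ) : IntegrableOn
    (fun f => ‖∑ m, x m * ee (-f) ^ (m : ℕ)‖ ^ 2) (Icc (-W) W) volume := by
  have := ee_cont
  have : Continuous (fun f => ‖∑ m, x m * ee (-f) ^ (m : ℕ)‖ ^ 2) := by fun_prop
  exact this.continuousOn.integrableOn_Icc

lemma prol_eig (M : ℕ) (W : ℝ) (hW : W ≤ 1 / 2) (i : Fin M) :
    0 ≤ (prol_herm M W).eigenvalues i ∧ (prol_herm M W).eigenvalues i ≤ 1 := by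
  refine eig_bounds _ (fun x => ?_) (fun x => ?_) i
  · rw [prol_quad]; positivity
  · have h := prol_quad M (1 / 2) x
    rw [prol_half, one_mulVec, dot_star_self, Complex.ofReal_re] at h
    rw [prol_quad, h]
    refine setIntegral_mono_set (poly_int M _ x) (Filter.Eventually.of_forall fun f => by positivity) ?_
    exact (Icc_subset_Icc (by linarith) hW).eventuallyLE

lemma prol_count (M k r : ℕ) (hk : 2 ≤ k) (hM : 0 < M) (W : ℝ) (hW0 : 0 ≤ W) (hW : W ≤ 1 / 2) :
    ((Finset.univ.filter fun i => (((M + r * k : ℕ) : ℝ) * (1 / 2) ^ r) ^ 2 * M <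
      (prol_herm M W).eigenvalues i).card : ℝ) ≤ 2 * (W + 1 / k) * ((M + r * k : ℕ) : ℝ) + 2 := by
  refine le_trans ?_ (nearSet_card (M + r * k) (W + 1 / k) (by positivity))
  set J := nearSet (M + r * k) (W + 1 / k) with hJ
  have h := count_eig (J := J) (prol_herm M W)
    (fun j => ∑ m : Fin M, ((ee (1 / ((M + r * k : ℕ) : ℝ)) ^ (j : ℕ)) ^ (m : ℕ)) •
      (LinearMap.proj m : (Fin M → ℂ) →ₗ[ℂ] ℂ))
    ((((M + r * k : ℕ) : ℝ) * (1 / 2) ^ r) ^ 2 * M) ?_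
  · rw [Fintype.card_coe] at h
    exact_mod_cast h
  · intro x hx
    have hx' : ∀ j ∈ nearSet (M + r * k) (W + 1 / k),
      ∑ m, x m * (ee (1 / ((M + r * k : ℕ) : ℝ)) ^ j) ^ (m : ℕ) = 0 := by
      intro j hj
      have := hx ⟨j, hj⟩
      simp only [LinearMap.sum_apply, LinearMap.smul_apply, LinearMap.proj_apply, smul_eq_mul] at this
      rw [← this]
      exact Finset.sum_congr rfl fun m _ => mul_comm _ _
    rw [prol_quad]
    set A := (((M + r * k : ℕ) : ℝ) * (1 / 2) ^ r) with hA
    have hb : ∀ f ∈ Icc (-W) W, ‖∑ m, x m * ee (-f) ^ (m : ℕ)‖ ^ 2 ≤ A ^ 2 * M * ∑ m, ‖x m‖ ^ 2 := by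
      intro f hf
      have h1 := arc_bound M k r hk hM W x hx' (-f) ⟨by linarith [hf.2], by linarith [hf.1]⟩
      have h2 : (∑ m, ‖x m‖) ^ 2 ≤ M * ∑ m, ‖x m‖ ^ 2 := by
        have := sq_sum_le_card_mul_sum_sq (s := (Finset.univ : Finset (Fin M))) (f := fun m => ‖x m‖)
        simpa using this
      calc _ ≤ (A * ∑ m, ‖x m‖) ^ 2 := by gcongr
        _ = A ^ 2 * (∑ m, ‖x m‖) ^ 2 := by ring
        _ ≤ A ^ 2 * (M * ∑ m, ‖x m‖ ^ 2) := by gcongr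
        _ = _ := by ring
    calc _ ≤ ∫ f in Icc (-W) W, A ^ 2 * M * ∑ m, ‖x m‖ ^ 2 := by
          refine setIntegral_mono_on (poly_int M W x) ?_ measurableSet_Icc hb
          exact continuous_const.continuousOn.integrableOn_Icc
      _ = (2 * W) * (A ^ 2 * M * ∑ m, ‖x m‖ ^ 2) := by
          rw [setIntegral_const, smul_eq_mul, Real.volume_real_Icc_of_le (by linarith)]; ring
      _ ≤ 1 * (A ^ 2 * M * ∑ m, ‖x m‖ ^ 2) := by
          gcongr; linarith
      _ = _ := one_mul _

lemma cluster1D (W δ : ℝ) (hW0 : 0 < W) (hW : W ≤ 1 / 2) (hδ : 0 < δ) :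
    ∃ (C c : ℝ) (M0 : ℕ), 0 < C ∧ 0 < c ∧ 1 ≤ M0 ∧ ∀ M : ℕ, M0 ≤ M →
      ((Finset.univ.filter fun i => C * Real.exp (-c * M) <
        (prol_herm M W).eigenvalues i).card : ℝ) ≤ 2 * W * M * (1 + δ) := by
  obtain ⟨k0, hk0⟩ := exists_nat_ge (4 / (W * δ))
  obtain ⟨M1, hM1⟩ := exists_nat_ge (2 / (W * δ))
  set k := k0 + 2 with hk
  have hkr : (2 : ℝ) ≤ k := by rw [hk]; push_cast; linarith [Nat.cast_nonneg (α := ℝ) k0]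
  have hk4 : 4 / (W * δ) ≤ k := by rw [hk]; push_cast; linarith
  have hkpos : (0 : ℝ) < k := by linarith
  set a : ℝ := 1 / (2 * k ^ 2) with ha
  have hapos : 0 < a := by positivity
  refine ⟨24 * Real.exp 1 / a ^ 3, a, M1 + 1, by positivity, hapos, by omega, ?_⟩
  intro M hM
  have hMpos : 0 < M := by omega
  have hMr : (0 : ℝ) < M := by exact_mod_cast hMpos
  have hM2 : 2 / (W * δ) ≤ M := hM1.trans (by exact_mod_cast (by omega : M1 ≤ M))
  set r := M / (k * k) with hr
  have hr1 : (r : ℝ) * k * k ≤ M := by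
    have : r * (k * k) ≤ M := Nat.div_mul_le_self _ _
    have : (r : ℝ) * (k * k) ≤ M := by exact_mod_cast this
    linarith
  have hr2 : (M : ℝ) / (k * k) - 1 ≤ r := by
    have := Nat.lt_div_mul_add (a := M) (b := k * k) (by positivity)
    have : (M : ℝ) < r * (k * k) + k * k := by exact_mod_cast this
    rw [sub_le_iff_le_add, div_le_iff₀ (by positivity)]
    linarith
  have hLe : ((M + r * k : ℕ) : ℝ) ≤ M * (1 + 1 / k) := by
    push_cast
    have : (r : ℝ) * k ≤ M / k := by rw [le_div_iff₀ hkpos]; exact hr1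
    calc (M : ℝ) + r * k ≤ M + M / k := by linarith
      _ = _ := by ring
  have hkinv : 1 / (k : ℝ) ≤ 1 / 2 := by gcongr
  have hkinv0 : 0 < 1 / (k : ℝ) := by positivity
  have hη : (((M + r * k : ℕ) : ℝ) * (1 / 2) ^ r) ^ 2 * M
      ≤ 24 * Real.exp 1 / a ^ 3 * Real.exp (-a * M) := by
    have e1 : ((M + r * k : ℕ) : ℝ) ≤ 2 * M := hLe.trans (by nlinarith)
    have e2 : ((1 / 2 : ℝ) ^ r) ^ 2 ≤ Real.exp 1 * Real.exp (-(2 * a * M)) := by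
      have : (1 / 2 : ℝ) ≤ Real.exp (-(1 / 2)) := by
        have := Real.add_one_le_exp (-(1 / 2 : ℝ)); linarith
      calc ((1 / 2 : ℝ) ^ r) ^ 2 ≤ (Real.exp (-(1 / 2)) ^ r) ^ 2 := by gcongr
        _ = Real.exp (-r) := by
          rw [← pow_mul, ← Real.exp_nat_mul]; congr 1; push_cast; ring
        _ ≤ Real.exp (1 + -(2 * a * M)) := by
          apply Real.exp_le_exp.2
          have : 2 * a * M = M / (k * k) := by rw [ha]; field_simp
          rw [this]; linarith
        _ = _ := Real.exp_add _ _
    have e3 : (M : ℝ) ^ 3 ≤ 6 / a ^ 3 * Real.exp (a * M) := by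
      have := Real.pow_div_factorial_le_exp (a * M) (by positivity) 3
      have h6 : ((Nat.factorial 3 : ℕ) : ℝ) = 6 := by norm_num [Nat.factorial]
      rw [h6, div_le_iff₀ (by norm_num), mul_pow] at this
      rw [div_mul_eq_mul_div, le_div_iff₀ (by positivity)]
      linarith
    calc (((M + r * k : ℕ) : ℝ) * (1 / 2) ^ r) ^ 2 * M
        = ((M + r * k : ℕ) : ℝ) ^ 2 * ((1 / 2) ^ r) ^ 2 * M := by ring
      _ ≤ (2 * M) ^ 2 * (Real.exp 1 * Real.exp (-(2 * a * M))) * M := by gcongr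
      _ = 4 * Real.exp 1 * Real.exp (-(2 * a * M)) * M ^ 3 := by ring
      _ ≤ 4 * Real.exp 1 * Real.exp (-(2 * a * M)) * (6 / a ^ 3 * Real.exp (a * M)) := by gcongr
      _ = 24 * Real.exp 1 / a ^ 3 * (Real.exp (-(2 * a * M)) * Real.exp (a * M)) := by ring
      _ = _ := by rw [← Real.exp_add]; congr 2; ring
  have hcount := prol_count M k r (by omega) hMpos W hW0.le hW
  have hmono : ((Finset.univ.filter fun i => 24 * Real.exp 1 / a ^ 3 * Real.exp (-a * M) <
        (prol_herm M W).eigenvalues i).card : ℝ) ≤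
      ((Finset.univ.filter fun i => (((M + r * k : ℕ) : ℝ) * (1 / 2) ^ r) ^ 2 * M <
      (prol_herm M W).eigenvalues i).card : ℝ) := by
    norm_cast
    apply Finset.card_le_card
    intro i hi
    rw [Finset.mem_filter] at hi ⊢
    exact ⟨hi.1, lt_of_le_of_lt hη hi.2⟩
  refine hmono.trans (hcount.trans ?_)
  have hWδ : 0 < W * δ := by positivity
  have f1 : 4 * (1 / (k : ℝ)) ≤ W * δ := by
    rw [div_le_iff₀ hWδ] at hk4
    rw [mul_one_div, div_le_iff₀ hkpos]; linarith
  have f2 : 2 ≤ W * δ * M := by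
    rw [div_le_iff₀ hWδ] at hM2; linarith
  have f3 : (W + 1 / k) * (1 + 1 / k) ≤ W + 2 * (1 / (k : ℝ)) := by nlinarith
  calc 2 * (W + 1 / k) * ((M + r * k : ℕ) : ℝ) + 2
      ≤ 2 * (W + 1 / k) * (M * (1 + 1 / k)) + 2 := by gcongr
    _ = 2 * M * ((W + 1 / k) * (1 + 1 / k)) + 2 := by ring
    _ ≤ 2 * M * (W + 2 * (1 / (k : ℝ))) + 2 := by gcongr
    _ ≤ _ := by nlinarith

open Kronecker in
lemma prolate2D_kron (M N : ℕ) (W0 W1 : ℝ) :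
    prolate2D M N (Set.Icc (-W0) W0 ×ˢ Set.Icc (-W1) W1) = prol M W0 ⊗ₖ prol N W1 := by
  ext i j
  rw [kroneckerMap_apply, prol, prol, prolate2D, ← setIntegral_prod_mul]
  rw [Measure.volume_eq_prod]
  congr 1
  ext fg
  rw [ee, ee, ← Complex.exp_add]
  congr 1; push_cast; ring

open Kronecker in
lemma kron_eig_count {m n : Type*} [Fintype m] [DecidableEq m] [Fintype n] [DecidableEq n]
    {A : Matrix m m ℂ} {B : Matrix n n ℂ} (hA : A.IsHermitian) (hB : B.IsHermitian)
    {D : Matrix (m × n) (m × n) ℂ} (hD : D.IsHermitian) (hDe : D = A ⊗ₖ B) (η : ℝ) :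
    (Finset.univ.filter fun i => η < hD.eigenvalues i).card =
    (Finset.univ.filter fun ij : m × n => η < hA.eigenvalues ij.1 * hB.eigenvalues ij.2).card := by
  obtain ⟨U, hU, hAU⟩ := spec_decomp hA
  obtain ⟨V, hV, hBV⟩ := spec_decomp hB
  have h1 : D.charpoly = (diagonal (fun ij : m × n =>
      ((hA.eigenvalues ij.1 * hB.eigenvalues ij.2 : ℝ) : ℂ))).charpoly := by
    have : D = ((U ⊗ₖ V) * diagonal (fun ij : m × n =>
      ((hA.eigenvalues ij.1 * hB.eigenvalues ij.2 : ℝ) : ℂ))) * (Uᴴ ⊗ₖ Vᴴ) := by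
      rw [hDe]
      conv_lhs => rw [hAU, hBV]
      rw [mul_kronecker_mul, mul_kronecker_mul, diagonal_kronecker_diagonal]
      simp
    rw [this, charpoly_mul_comm, ← Matrix.mul_assoc, ← mul_kronecker_mul, hU, hV,
      one_kronecker_one, Matrix.one_mul]
  have h2 := hD.roots_charpoly_eq_eigenvalues
  rw [h1, charpoly_diagonal, Polynomial.roots_prod _ _
    (Finset.prod_ne_zero_iff.2 fun i _ => Polynomial.X_sub_C_ne_zero _)] at h2
  simp only [Polynomial.roots_X_sub_C, Multiset.bind_singleton] at h2
  have h3 := congrArg (Multiset.countP fun z : ℂ => η < z.re) h2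
  rw [Multiset.countP_map, Multiset.countP_map] at h3
  simp only [Complex.ofReal_re, Function.comp, Complex.coe_algebraMap] at h3
  exact h3.symm

theorem prolate2D_eigenvalue_cluster_near_zero
    (W0 W1 : ℝ) (hW0 : W0 ∈ Set.Ioo (0 : ℝ) (1 / 2)) (hW1 : W1 ∈ Set.Ioo (0 : ℝ) (1 / 2))
    (ε : ℝ) (hε : ε ∈ Set.Ioo (0 : ℝ) (1 / (4 * W0 * W1) - 1)) :
    ∃ (Cbar₃ Cbar₄ : ℝ) (Mbar₂ Nbar₂ : ℕ), 0 < Cbar₃ ∧ 0 < Cbar₄ ∧ 1 ≤ Mbar₂ ∧ 1 ≤ Nbar₂ ∧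
      ∀ (M N : ℕ), Mbar₂ ≤ M → Nbar₂ ≤ N →
        ∀ (hA : (prolate2D M N (Set.Icc (-W0) W0 ×ˢ Set.Icc (-W1) W1)).IsHermitian)
          (μ : Fin (M * N) → ℝ),
          Antitone μ →
          (∃ e : (Fin M × Fin N) ≃ Fin (M * N), hA.eigenvalues = μ ∘ e) →
          ∀ p : Fin (M * N), ⌈4 * (M : ℝ) * (N : ℝ) * W0 * W1 * (1 + ε)⌉₊ ≤ (p : ℕ) →
            μ p ≤ Cbar₃ * Real.exp (-Cbar₄ * min (M : ℝ) (N : ℝ)) := by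
  obtain ⟨a0, a1⟩ := hW0
  obtain ⟨b0, b1⟩ := hW1
  obtain ⟨ε0, -⟩ := hε
  set δ : ℝ := min 1 (ε / 3) with hδ
  have hδ0 : 0 < δ := lt_min one_pos (by linarith)
  have hδ1 : δ ≤ 1 := min_le_left _ _
  have hδ2 : δ ≤ ε / 3 := min_le_right _ _
  have hδε : (1 + δ) * (1 + δ) ≤ 1 + ε := by nlinarith
  obtain ⟨C, c, M0, hC, hc, hM0, hM⟩ := cluster1D W0 δ a0 a1.le hδ0
  obtain ⟨C', c', N0, hC', hc', hN0, hN⟩ := cluster1D W1 δ b0 b1.le hδ0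
  refine ⟨max C C', min c c', M0, N0, lt_max_of_lt_left hC, lt_min hc hc', hM0, hN0, ?_⟩
  intro M N hMM hNN hA μ hμ ⟨e, he⟩ p hp
  set η := max C C' * Real.exp (-min c c' * min (M : ℝ) (N : ℝ)) with hη
  have hmn0 : (0 : ℝ) ≤ min (M : ℝ) (N : ℝ) := by positivity
  have hη0 : C * Real.exp (-c * M) ≤ η := by
    refine mul_le_mul (le_max_left _ _) (Real.exp_le_exp.2 ?_) (Real.exp_pos _).le
      (hC.le.trans (le_max_left _ _))
    have := mul_le_mul (min_le_left c c') (min_le_left (M : ℝ) N) hmn0 hc.le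
    linarith
  have hη1 : C' * Real.exp (-c' * N) ≤ η := by
    refine mul_le_mul (le_max_right _ _) (Real.exp_le_exp.2 ?_) (Real.exp_pos _).le
      (hC.le.trans (le_max_left _ _))
    have := mul_le_mul (min_le_right c c') (min_le_right (M : ℝ) N) hmn0 hc'.le
    linarith
  by_contra hcon
  push Not at hcon
  set S0 := Finset.univ.filter fun i => C * Real.exp (-c * M) < (prol_herm M W0).eigenvalues i
    with hS0
  set S1 := Finset.univ.filter fun i => C' * Real.exp (-c' * N) < (prol_herm N W1).eigenvalues i
    with hS1
  have k0 : (S0.card : ℝ) ≤ _ := hM M hMM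
  have k1 : (S1.card : ℝ) ≤ _ := hN N hNN
  have u1 : (p : ℕ) + 1 ≤ (Finset.univ.filter fun q => η < μ q).card := by
    rw [← Fin.card_Iic]
    apply Finset.card_le_card
    intro q hq
    rw [Finset.mem_filter]
    exact ⟨Finset.mem_univ _, hcon.trans_le (hμ (Finset.mem_Iic.1 hq))⟩
  have u2 : (Finset.univ.filter fun q => η < μ q).card
      = (Finset.univ.filter fun i => η < hA.eigenvalues i).card := by
    symm
    refine Finset.card_equiv e fun i => ?_
    have hi : hA.eigenvalues i = μ (e i) := congrFun he i
    rw [Finset.mem_filter, Finset.mem_filter, hi]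
    simp only [Finset.mem_univ]
  have u3 := kron_eig_count (prol_herm M W0) (prol_herm N W1) hA (prolate2D_kron M N W0 W1) η
  have u4 : (Finset.univ.filter fun ij : Fin M × Fin N => η < (prol_herm M W0).eigenvalues ij.1 *
      (prol_herm N W1).eigenvalues ij.2).card ≤ S0.card * S1.card := by
    rw [← Finset.card_product]
    apply Finset.card_le_card
    rintro ⟨i, j⟩ hij
    rw [Finset.mem_filter] at hij
    have hij := hij.2
    obtain ⟨x0, x1⟩ := prol_eig M W0 a1.le i
    obtain ⟨y0, y1⟩ := prol_eig N W1 b1.le j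
    rw [Finset.mem_product, hS0, hS1, Finset.mem_filter, Finset.mem_filter]
    refine ⟨⟨Finset.mem_univ _, ?_⟩, ⟨Finset.mem_univ _, ?_⟩⟩
    · exact hη0.trans_lt (hij.trans_le (mul_le_of_le_one_right x0 y1))
    · exact hη1.trans_lt (hij.trans_le (mul_le_of_le_one_left y0 x1))
  have u5 : (p : ℕ) + 1 ≤ S0.card * S1.card := by omega
  have u6 : ((p : ℕ) : ℝ) + 1 ≤ S0.card * S1.card := by exact_mod_cast u5
  have u7 := Nat.ceil_le.1 hp
  have u8 : (S0.card : ℝ) * S1.card ≤ (2 * W0 * M * (1 + δ)) * (2 * W1 * N * (1 + δ)) := by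
    gcongr
  have u9 : (2 * W0 * M * (1 + δ)) * (2 * W1 * N * (1 + δ)) ≤ 4 * (M : ℝ) * N * W0 * W1 * (1 + ε) := by
    calc _ = 4 * (M : ℝ) * N * W0 * W1 * ((1 + δ) * (1 + δ)) := by ring
      _ ≤ _ := by gcongr
  linarith
end

section
/- Let M, N ≥ 1 and let 𝕎 ⊆ [−1/2, 1/2]² be a measurable set whose Lebesgue measure ‖𝕎‖ satisfies 0 < ‖𝕎‖ and whose complement in [−1/2, 1/2]² has positive Lebesgue measure. Then every eigenvalue of B_{(M,N),𝕎} satisfies 0 < λ_{(M,N),𝕎}^{(p)} < 1 for all 0 ≤ p ≤ MN−1, and the eigenvalues sum to Σ_{p=0}^{MN−1} λ_{(M,N),𝕎}^{(p)} = MN·‖𝕎‖. -/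
open MeasureTheory Matrix Real Set

/-- The conjugate character. -/
noncomputable def prE {M N : ℕ} (i : Fin M × Fin N) (p : ℝ × ℝ) : ℂ :=
  Complex.exp (-(2 * (Real.pi : ℂ) * Complex.I * (p.1 : ℂ))) ^ (i.1 : ℕ) *
  Complex.exp (-(2 * (Real.pi : ℂ) * Complex.I * (p.2 : ℂ))) ^ (i.2 : ℕ)

lemma trig_null {N : ℕ} (c : Fin N → ℂ) (hc : c ≠ 0) :
    volume {g : ℝ | ∑ n, c n * Complex.exp (-(2 * (Real.pi : ℂ) * Complex.I * (g : ℂ))) ^ (n : ℕ) = 0} = 0 := by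
  classical
  let P : Polynomial ℂ := ∑ n : Fin N, Polynomial.monomial (n : ℕ) (c n)
  have hP : P ≠ 0 := by
    intro h
    apply hc
    funext n
    have := congrArg (fun p => Polynomial.coeff p (n : ℕ)) h
    simpa [P, Polynomial.finsetSum_coeff, Polynomial.coeff_monomial, Fin.val_inj] using this
  have hsub : {g : ℝ | ∑ n, c n * Complex.exp (-(2 * (Real.pi : ℂ) * Complex.I * (g : ℂ))) ^ (n : ℕ) = 0}
      ⊆ ⋃ z ∈ P.roots.toFinset, {g : ℝ | Complex.exp (-(2 * (Real.pi : ℂ) * Complex.I * (g : ℂ))) = z} := by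
    intro g hg
    simp only [mem_iUnion, mem_ofPred_eq, exists_prop, exists_eq_right', Multiset.mem_toFinset]
    rw [Polynomial.mem_roots hP]
    simpa [P, Polynomial.IsRoot, Polynomial.eval_finsetSum] using hg
  refine measure_mono_null hsub ?_
  refine (Set.Countable.biUnion (Finset.countable_toSet _) ?_).measure_zero _
  intro z _
  by_cases hne : {g : ℝ | Complex.exp (-(2 * (Real.pi : ℂ) * Complex.I * (g : ℂ))) = z}.Nonempty
  · obtain ⟨g0, hg0⟩ := hne
    refine (Set.countable_range (fun n : ℤ => g0 - n)).mono ?_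
    intro g hg
    simp only [mem_ofPred_eq] at hg hg0
    rw [← hg0, Complex.exp_eq_exp_iff_exists_int] at hg
    obtain ⟨n, hn⟩ := hg
    refine ⟨n, ?_⟩
    have h2 : (2 * (Real.pi : ℂ) * Complex.I) ≠ 0 := Complex.two_pi_I_ne_zero
    have : (g : ℂ) = g0 - n := by
      apply mul_left_cancel₀ h2
      linear_combination -hn
    simp only
    exact_mod_cast this.symm
  · rw [Set.not_nonempty_iff_eq_empty.1 hne]; exact Set.countable_empty

lemma prE_continuous {M N : ℕ} (i : Fin M × Fin N) : Continuous (prE i) := by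
  unfold prE; fun_prop

lemma trig_null2 {M N : ℕ} (x : Fin M × Fin N → ℂ) (hx : x ≠ 0) :
    volume {p : ℝ × ℝ | ∑ i, x i * prE i p = 0} = 0 := by
  have hcont : Continuous (fun p : ℝ × ℝ => ∑ i, x i * prE i p) :=
    continuous_finsetSum _ fun i _ => continuous_const.mul (prE_continuous i)
  have hm : MeasurableSet {p : ℝ × ℝ | ∑ i, x i * prE i p = 0} :=
    (isClosed_eq hcont continuous_const).measurableSet
  rw [Measure.volume_eq_prod, Measure.measure_prod_null hm]
  obtain ⟨⟨m0, n0⟩, h0⟩ := Function.ne_iff.1 hx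
  have h1 := trig_null (fun m => x (m, n0)) (Function.ne_iff.2 ⟨m0, h0⟩)
  have h2 := measure_eq_zero_iff_ae_notMem.1 h1
  filter_upwards [h2] with a ha
  have h3 := trig_null (fun n => ∑ m, x (m, n) *
    Complex.exp (-(2 * (Real.pi : ℂ) * Complex.I * (a : ℂ))) ^ (m : ℕ))
    (Function.ne_iff.2 ⟨n0, ha⟩)
  convert h3 using 2
  ext g
  simp only [mem_preimage, mem_ofPred_eq, prE]
  rw [Fintype.sum_prod_type_right]
  simp only [Finset.sum_mul, mul_assoc]
  rfl

lemma kern_eq {M N : ℕ} (i j : Fin M × Fin N) (p : ℝ × ℝ) :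
    Complex.exp (2 * (Real.pi : ℂ) * Complex.I *
      ((p.1 : ℂ) * (((i.1 : ℕ) : ℂ) - ((j.1 : ℕ) : ℂ)) +
       (p.2 : ℂ) * (((i.2 : ℕ) : ℂ) - ((j.2 : ℕ) : ℂ)))) = star (prE i p) * prE j p := by
  simp only [prE, ← Complex.exp_nat_mul, ← Complex.exp_add, Complex.star_def, ← Complex.exp_conj]
  congr 1
  simp [Complex.conj_ofNat]
  ring

lemma kern_int {M N : ℕ} (i j : Fin M × Fin N) (S : Set (ℝ × ℝ)) (hb : Bornology.IsBounded S) :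
    IntegrableOn (fun p => star (prE i p) * prE j p) S := by
  have hc : Continuous (fun p => star (prE i p) * prE j p) :=
    (prE_continuous i).star.mul (prE_continuous j)
  exact (hc.continuousOn.integrableOn_compact hb.isCompact_closure).mono_set subset_closure

lemma quad {M N : ℕ} (S : Set (ℝ × ℝ)) (hb : Bornology.IsBounded S) (x : Fin M × Fin N → ℂ) :
    star x ⬝ᵥ (prolate2D M N S *ᵥ x) = ((∫ p in S, ‖∑ i, x i * prE i p‖ ^ 2 : ℝ) : ℂ) := by
  rw [← integral_complex_ofReal]
  have : ∀ p : ℝ × ℝ, ((‖∑ i, x i * prE i p‖ ^ 2 : ℝ) : ℂ) =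
      ∑ i, ∑ j, (star (x i) * x j) * (star (prE i p) * prE j p) := by
    intro p
    rw [Complex.ofReal_pow, ← Complex.conj_mul', map_sum, Finset.sum_mul_sum]
    refine Finset.sum_congr rfl fun i _ => Finset.sum_congr rfl fun j _ => ?_
    simp; ring
  simp only [this]
  rw [integral_finsetSum]
  · simp only [dotProduct, mulVec, Finset.mul_sum]
    refine Finset.sum_congr rfl fun i _ => ?_
    rw [integral_finsetSum]
    · refine Finset.sum_congr rfl fun j _ => ?_
      rw [integral_const_mul]
      simp only [prolate2D, kern_eq, Pi.star_apply]
      ring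
    · intro j _; exact (kern_int i j S hb).const_mul _
  · intro i _
    exact integrable_finsetSum _ fun j _ => (kern_int i j S hb).const_mul _

lemma quad_pos {M N : ℕ} (S : Set (ℝ × ℝ)) (hb : Bornology.IsBounded S)
    (hS : 0 < (volume S).toReal) (x : Fin M × Fin N → ℂ) (hx : x ≠ 0) :
    0 < ∫ p in S, ‖∑ i, x i * prE i p‖ ^ 2 := by
  have hcont : Continuous (fun p : ℝ × ℝ => ‖∑ i, x i * prE i p‖ ^ 2) :=
    (continuous_finsetSum _ fun i _ => continuous_const.mul (prE_continuous i)).norm.pow 2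
  have hint : IntegrableOn (fun p : ℝ × ℝ => ‖∑ i, x i * prE i p‖ ^ 2) S :=
    (hcont.continuousOn.integrableOn_compact hb.isCompact_closure).mono_set subset_closure
  rw [integral_pos_iff_support_of_nonneg (fun p => by positivity) hint]
  rw [pos_iff_ne_zero]
  intro h
  have hz := Measure.restrict_apply_superset (μ := volume) (s := S)
    (t := Set.univ) (subset_univ _)
  have h2 : (volume.restrict S) {p : ℝ × ℝ | ∑ i, x i * prE i p = 0} = 0 :=
    le_antisymm ((Measure.restrict_apply_le _ _).trans (trig_null2 x hx).le) zero_le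
  have h3 : (volume.restrict S) Set.univ = 0 := by
    refine measure_mono_null ?_ (measure_union_null h h2)
    intro p _
    by_cases hp : ∑ i, x i * prE i p = 0
    · right; exact hp
    · left; simpa [Function.mem_support] using hp
  rw [Measure.restrict_apply_univ] at h3
  simp [h3] at hS

/-- The unit square. -/
def unitSq : Set (ℝ × ℝ) := Set.Icc (-(1 / 2) : ℝ) (1 / 2) ×ˢ Set.Icc (-(1 / 2) : ℝ) (1 / 2)

lemma sq_bdd : Bornology.IsBounded unitSq := (isCompact_Icc.prod isCompact_Icc).isBounded

lemma int1 (k : ℤ) : ∫ f in Set.Icc (-(1 / 2) : ℝ) (1 / 2),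
    Complex.exp (2 * (Real.pi : ℂ) * Complex.I * ((f : ℂ) * (k : ℂ))) = if k = 0 then 1 else 0 := by
  rw [integral_Icc_eq_integral_Ioc, ← intervalIntegral.integral_of_le (by norm_num)]
  split_ifs with h
  · subst h; simp; norm_num
  · have hk : (2 * (Real.pi : ℂ) * Complex.I * (k : ℂ)) ≠ 0 :=
      mul_ne_zero Complex.two_pi_I_ne_zero (by exact_mod_cast h)
    have e : ∀ f : ℝ, Complex.exp (2 * (Real.pi : ℂ) * Complex.I * ((f : ℂ) * (k : ℂ))) =
        Complex.exp ((2 * (Real.pi : ℂ) * Complex.I * (k : ℂ)) * f) := by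
      intro f; congr 1; ring
    simp only [e]
    rw [integral_exp_mul_complex hk, div_eq_zero_iff, sub_eq_zero]
    left
    rw [Complex.exp_eq_exp_iff_exists_int]
    refine ⟨k, ?_⟩
    push_cast; ring

lemma prolate_sq (M N : ℕ) : prolate2D M N unitSq = 1 := by
  ext i j
  have e : ∀ p : ℝ × ℝ, Complex.exp (2 * (Real.pi : ℂ) * Complex.I *
      ((p.1 : ℂ) * (((i.1 : ℕ) : ℂ) - ((j.1 : ℕ) : ℂ)) +
       (p.2 : ℂ) * (((i.2 : ℕ) : ℂ) - ((j.2 : ℕ) : ℂ)))) =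
      Complex.exp (2 * (Real.pi : ℂ) * Complex.I * ((p.1 : ℂ) * ((((i.1 : ℕ) : ℤ) - ((j.1 : ℕ) : ℤ) : ℤ) : ℂ))) *
      Complex.exp (2 * (Real.pi : ℂ) * Complex.I * ((p.2 : ℂ) * ((((i.2 : ℕ) : ℤ) - ((j.2 : ℕ) : ℤ) : ℤ) : ℂ))) := by
    intro p; rw [← Complex.exp_add]; congr 1; push_cast; ring
  simp only [prolate2D, e, unitSq]
  rw [Measure.volume_eq_prod, setIntegral_prod_mul
    (fun f : ℝ => Complex.exp (2 * (Real.pi : ℂ) * Complex.I * ((f : ℂ) * ((((i.1 : ℕ) : ℤ) - ((j.1 : ℕ) : ℤ) : ℤ) : ℂ))))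
    (fun f : ℝ => Complex.exp (2 * (Real.pi : ℂ) * Complex.I * ((f : ℂ) * ((((i.2 : ℕ) : ℤ) - ((j.2 : ℕ) : ℤ) : ℤ) : ℂ)))), int1, int1]
  rw [Matrix.one_apply]
  simp only [sub_eq_zero, Nat.cast_inj, Fin.val_inj, Prod.ext_iff]
  split_ifs <;> simp_all

lemma quad_split {M N : ℕ} (W : Set (ℝ × ℝ)) (hm : MeasurableSet W) (hs : W ⊆ unitSq)
    : prolate2D M N (unitSq \ W) = 1 - prolate2D M N W := by
  rw [← prolate_sq M N]
  ext i j
  simp only [Matrix.sub_apply, prolate2D, kern_eq]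
  exact setIntegral_sdiff hm (kern_int i j unitSq sq_bdd) hs

theorem prolate2D_eigenvalue_bounds_and_trace
    (M N : ℕ) (hM : 1 ≤ M) (hN : 1 ≤ N)
    (𝕎 : Set (ℝ × ℝ)) (hmeas : MeasurableSet 𝕎)
    (hsub : 𝕎 ⊆ Set.Icc (-(1 / 2) : ℝ) (1 / 2) ×ˢ Set.Icc (-(1 / 2) : ℝ) (1 / 2))
    (hpos : 0 < (volume 𝕎).toReal)
    (hcomp : 0 < (volume ((Set.Icc (-(1 / 2) : ℝ) (1 / 2) ×ˢ
        Set.Icc (-(1 / 2) : ℝ) (1 / 2)) \ 𝕎)).toReal)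
    (hA : (prolate2D M N 𝕎).IsHermitian)
    (μ : Fin (M * N) → ℝ) (hμ : Antitone μ)
    (hperm : ∃ e : (Fin M × Fin N) ≃ Fin (M * N), hA.eigenvalues = μ ∘ e) :
    (∀ p : Fin (M * N), 0 < μ p ∧ μ p < 1) ∧
      (∑ p : Fin (M * N), μ p) = (M : ℝ) * (N : ℝ) * (volume 𝕎).toReal := by
  obtain ⟨e, he⟩ := hperm
  have hb : Bornology.IsBounded 𝕎 := sq_bdd.subset hsub
  have hb' : Bornology.IsBounded (unitSq \ 𝕎) := sq_bdd.subset sdiff_subset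
  have key : ∀ i, 0 < hA.eigenvalues i ∧ hA.eigenvalues i < 1 := by
    intro i
    let v : Fin M × Fin N → ℂ := WithLp.ofLp (hA.eigenvectorBasis i)
    have hv1 : star v ⬝ᵥ v = 1 := by
      have h := inner_self_eq_norm_sq_to_K (𝕜 := ℂ) (hA.eigenvectorBasis i)
      rw [hA.eigenvectorBasis.orthonormal.1 i, EuclideanSpace.inner_eq_star_dotProduct,
        dotProduct_comm] at h
      simpa using h
    have hv0 : v ≠ 0 := by
      intro h; rw [h] at hv1; simp at hv1
    have hev : prolate2D M N 𝕎 *ᵥ v = ((hA.eigenvalues i : ℝ) : ℂ) • v := by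
      have := hA.mulVec_eigenvectorBasis i
      simpa using this
    have q1 := quad 𝕎 hb v
    have q2 := quad (unitSq \ 𝕎) hb' v
    rw [quad_split 𝕎 hmeas hsub, sub_mulVec, dotProduct_sub, one_mulVec, hv1] at q2
    rw [hev, dotProduct_smul, hv1] at q1 q2
    have p1 := quad_pos 𝕎 hb hpos v hv0
    have p2 := quad_pos (unitSq \ 𝕎) hb' hcomp v hv0
    simp only [smul_eq_mul, mul_one] at q1 q2
    have q1' := Complex.ofReal_injective q1
    have q2' : 1 - hA.eigenvalues i = ∫ p in unitSq \ 𝕎, ‖∑ i, v i * prE i p‖ ^ 2 := by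
      exact_mod_cast q2
    constructor <;> linarith
  constructor
  · intro p
    have := key (e.symm p)
    simpa [he] using this
  · have ht := hA.trace_eq_sum_eigenvalues
    have h2 : (prolate2D M N 𝕎).trace = (((M : ℝ) * (N : ℝ) * (volume 𝕎).toReal : ℝ) : ℂ) := by
      simp [Matrix.trace, prolate2D, Measure.real]
    rw [h2] at ht
    have h3 : (M : ℝ) * (N : ℝ) * (volume 𝕎).toReal = ∑ i, hA.eigenvalues i := by
      apply Complex.ofReal_injective
      rw [ht]
      simp
    rw [h3, he]
    exact (Equiv.sum_comp e μ).symm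
end

section
/- For every half-bandwidth W ∈ (0, 1/2) and every N ≥ 2, the squared Frobenius norm of the prolate matrix satisfies ‖B_{N,W}‖_F² ≥ 2NW − (2/π²)·(2N−1)/(N−1) − (2/π²)·log(N−1). -/
open MeasureTheory Matrix Real Set

/-- The real symmetric prolate matrix `B_{N,W}` with entries
`sin(2πW(m−n))/(π(m−n))` off the diagonal and `2W` on the diagonal. -/
noncomputable def prolateR (N : ℕ) (W : ℝ) : Matrix (Fin N) (Fin N) ℝ :=
  fun m n => if m = n then 2 * W
    else Real.sin (2 * Real.pi * W * (((m : ℕ) : ℝ) - ((n : ℕ) : ℝ))) /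
      (Real.pi * (((m : ℕ) : ℝ) - ((n : ℕ) : ℝ)))

noncomputable def hk (W : ℝ) (k : ℕ) : ℝ := Real.sin (2 * Real.pi * W * k) ^ 2 / (k : ℝ) ^ 2

lemma hk_hasSum (W : ℝ) (hW : W ∈ Set.Ioo (0 : ℝ) (1 / 2)) :
    HasSum (hk W) (π ^ 2 * (W - 2 * W ^ 2)) := by
  have h1 := hasSum_one_div_nat_pow_mul_cos (k := 1) one_ne_zero (x := 2 * W)
    ⟨by linarith [hW.1], by linarith [hW.2]⟩
  have h0 := hasSum_one_div_nat_pow_mul_cos (k := 1) one_ne_zero (x := 0) ⟨le_rfl, zero_le_one⟩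
  have h := (h0.sub h1).div_const 2
  have hb : ∀ x : ℝ, Polynomial.eval x (Polynomial.map (algebraMap ℚ ℝ) (Polynomial.bernoulli (2 * 1)))
      = x ^ 2 - x + 1 / 6 := by
    intro x
    have : bernoulli 1 = -1 / 2 := bernoulli_one
    simp [Polynomial.bernoulli, Finset.sum_range_succ, bernoulli_one, bernoulli_two]
    ring
  rw [hb, hb] at h
  have e1 : hk W = fun i : ℕ => (1 / (i : ℝ) ^ (2 * 1) * cos (2 * π * i * 0) -
      1 / (i : ℝ) ^ (2 * 1) * cos (2 * π * i * (2 * W))) / 2 := by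
    funext k
    simp only [hk, mul_one, mul_zero, Real.cos_zero]
    rw [Real.sin_sq_eq_half_sub]
    rw [show 2 * (2 * π * W * (k : ℝ)) = 2 * π * k * (2 * W) by ring]
    ring
  rw [e1]
  refine (congrArg (fun t => HasSum _ t _) ?_).mp h
  simp
  ring

lemma hk_nonneg (W : ℝ) (k : ℕ) : 0 ≤ hk W k := by unfold hk; positivity

lemma hk_le (W : ℝ) (k : ℕ) : hk W k ≤ 1 / (k : ℝ) ^ 2 := by
  unfold hk
  gcongr
  exact Real.sin_sq_le_one _

lemma hk_partial (W : ℝ) (n : ℕ) (hn : 1 ≤ n) (j : ℕ) :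
    ∑ k ∈ Finset.range (n + 1 + j), hk W k ≤
      ∑ k ∈ Finset.range (n + 1), hk W k + 1 / (n : ℝ) - 1 / ((n : ℝ) + j) := by
  have hn' : (1 : ℝ) ≤ n := by exact_mod_cast hn
  induction j with
  | zero => simp
  | succ j ih =>
    rw [← add_assoc, Finset.sum_range_succ]
    have h := hk_le W (n + 1 + j)
    have : 1 / ((n + 1 + j : ℕ) : ℝ) ^ 2 ≤ 1 / ((n : ℝ) + j) - 1 / ((n : ℝ) + (j + 1 : ℕ)) := by
      push_cast
      have hp : 0 < (n : ℝ) + j := by positivity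
      rw [show (n : ℝ) + 1 + j = (n + j) + 1 by ring, show (n : ℝ) + (j + 1) = (n + j) + 1 by ring]
      generalize (n : ℝ) + j = a at hp
      rw [div_sub_div _ _ (by positivity) (by positivity),
        div_le_div_iff₀ (by positivity) (by positivity)]
      nlinarith
    linarith

lemma hk_tail (W : ℝ) (hW : W ∈ Set.Ioo (0 : ℝ) (1 / 2)) (n : ℕ) (hn : 1 ≤ n) :
    π ^ 2 * (W - 2 * W ^ 2) ≤ ∑ k ∈ Finset.range (n + 1), hk W k + 1 / (n : ℝ) := by
  refine le_of_tendsto' (hk_hasSum W hW).tendsto_sum_nat ?_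
  intro m
  have h := hk_partial W n hn m
  have h2 : ∑ k ∈ Finset.range m, hk W k ≤ ∑ k ∈ Finset.range (n + 1 + m), hk W k :=
    Finset.sum_le_sum_of_subset_of_nonneg (Finset.range_mono (by omega))
      (fun k _ _ => hk_nonneg W k)
  have h3 : 0 ≤ 1 / ((n : ℝ) + m) := by positivity
  linarith

lemma hk_head (W : ℝ) (n : ℕ) :
    ∑ k ∈ Finset.range (n + 1), (k : ℝ) * hk W k ≤ 1 + Real.log n := by
  refine le_trans ?_ (harmonic_le_one_add_log n)
  rw [Finset.sum_range_succ', harmonic]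
  push_cast
  simp only [zero_mul, add_zero]
  refine Finset.sum_le_sum fun k _ => ?_
  have h := hk_le W (k + 1)
  push_cast at h
  calc ((k : ℝ) + 1) * hk W (k + 1) ≤ ((k : ℝ) + 1) * (1 / ((k : ℝ) + 1) ^ 2) := by gcongr
    _ = _ := by field_simp

lemma ent (N : ℕ) (W : ℝ) (m n : Fin N) : prolateR N W m n ^ 2 =
    (if (m : ℕ) = n then 4 * W ^ 2 else 0) + 1 / π ^ 2 * (hk W (m - n) + hk W (n - m)) := by
  unfold prolateR hk
  rcases lt_trichotomy (m : ℕ) n with h | h | h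
  · have : m ≠ n := fun e => by simp [e] at h
    rw [if_neg this, if_neg h.ne, Nat.sub_eq_zero_of_le h.le, Nat.cast_sub h.le]
    rw [show ((m : ℕ) : ℝ) - (n : ℕ) = -((n : ℕ) - (m : ℕ)) by ring]
    simp only [mul_neg, Real.sin_neg]
    simp
    field_simp
  · have : m = n := Fin.ext h
    subst this
    simp
    ring
  · have : m ≠ n := fun e => by simp [e] at h
    rw [if_neg this, if_neg h.ne', Nat.sub_eq_zero_of_le h.le, Nat.cast_sub h.le]
    simp
    field_simp

lemma dbl (h : ℕ → ℝ) (N : ℕ) (h0 : h 0 = 0) :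
    ∑ m ∈ Finset.range N, ∑ n ∈ Finset.range N, h (m - n) =
      ∑ k ∈ Finset.range N, ((N : ℝ) - k) * h k := by
  induction N with
  | zero => simp
  | succ N ih =>
    rw [Finset.sum_range_succ]
    have e1 : ∑ m ∈ Finset.range N, ∑ n ∈ Finset.range (N + 1), h (m - n) =
        ∑ m ∈ Finset.range N, ∑ n ∈ Finset.range N, h (m - n) := by
      refine Finset.sum_congr rfl fun m hm => ?_
      rw [Finset.sum_range_succ, Nat.sub_eq_zero_of_le (Finset.mem_range.1 hm).le, h0, add_zero]
    have e2 : ∑ n ∈ Finset.range (N + 1), h (N - n) = ∑ k ∈ Finset.range (N + 1), h k := by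
      simpa using Finset.sum_range_reflect h (N + 1)
    rw [e1, e2, ih]
    have e3 : ∑ k ∈ Finset.range N, ((N : ℝ) - k) * h k =
        ∑ k ∈ Finset.range (N + 1), ((N : ℝ) - k) * h k := by
      rw [Finset.sum_range_succ]; simp
    rw [e3, ← Finset.sum_add_distrib]
    refine Finset.sum_congr rfl fun k _ => ?_
    push_cast
    ring

lemma total (N : ℕ) (W : ℝ) : ∑ m : Fin N, ∑ n : Fin N, (prolateR N W m n) ^ 2 =
    4 * W ^ 2 * N + 2 / π ^ 2 * ∑ k ∈ Finset.range N, ((N : ℝ) - k) * hk W k := by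
  have h0 : hk W 0 = 0 := by simp [hk]
  simp only [ent]
  rw [← dbl (hk W) N h0]
  have key : ∑ m : Fin N, ∑ n : Fin N, hk W (m - n) =
      ∑ m ∈ Finset.range N, ∑ n ∈ Finset.range N, hk W (m - n) := by
    rw [← Fin.sum_univ_eq_sum_range (fun m => ∑ n ∈ Finset.range N, hk W (m - n))]
    refine Finset.sum_congr rfl fun m _ => ?_
    rw [← Fin.sum_univ_eq_sum_range (fun n => hk W (m - n))]
  have key2 : ∑ m : Fin N, ∑ n : Fin N, hk W (n - m) =
      ∑ m ∈ Finset.range N, ∑ n ∈ Finset.range N, hk W (m - n) := by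
    rw [Finset.sum_comm, key]
  simp only [Finset.sum_add_distrib, ← Finset.mul_sum]
  rw [key, key2]
  have : ∑ m : Fin N, ∑ n : Fin N, (if (m : ℕ) = n then 4 * W ^ 2 else 0) = 4 * W ^ 2 * N := by
    simp [← Fin.ext_iff]
    ring
  rw [this]
  ring

theorem prolate_frobenius_norm_lower_bound
    (W : ℝ) (hW : W ∈ Set.Ioo (0 : ℝ) (1 / 2)) (N : ℕ) (hN : 2 ≤ N) :
    2 * (N : ℝ) * W - (2 / Real.pi ^ 2) * ((2 * (N : ℝ) - 1) / ((N : ℝ) - 1))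
        - (2 / Real.pi ^ 2) * Real.log ((N : ℝ) - 1)
      ≤ ∑ m : Fin N, ∑ n : Fin N, (prolateR N W m n) ^ 2 := by
  obtain ⟨n, rfl⟩ : ∃ n, N = n + 1 := ⟨N - 1, by omega⟩
  have hn : 1 ≤ n := by omega
  have hn' : (1 : ℝ) ≤ n := by exact_mod_cast hn
  rw [total]
  have ht := hk_tail W hW n hn
  have hh := hk_head W n
  simp only [sub_mul, Finset.sum_sub_distrib, ← Finset.mul_sum]
  push_cast
  rw [add_sub_cancel_right]
  set A := ∑ k ∈ Finset.range (n + 1), hk W k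
  set B := ∑ k ∈ Finset.range (n + 1), (k : ℝ) * hk W k
  have e : (2 * ((n : ℝ) + 1) - 1) / n = (n + 1) * (1 / n) + 1 := by field_simp; ring
  rw [e]
  have hp : 0 < 2 / π ^ 2 := by positivity
  have e2 : 2 * ((n : ℝ) + 1) * W =
      4 * W ^ 2 * (n + 1) + 2 / π ^ 2 * ((n + 1) * (π ^ 2 * (W - 2 * W ^ 2))) := by
    field_simp; ring
  rw [e2]
  have h1 := mul_le_mul_of_nonneg_left ht (by positivity : (0 : ℝ) ≤ n + 1)
  have h2 : (n + 1) * (π ^ 2 * (W - 2 * W ^ 2)) - ((n + 1) * (1 / (n : ℝ)) + 1) - Real.log n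
      ≤ (n + 1) * A - B := by linarith
  have h3 := mul_le_mul_of_nonneg_left h2 hp.le
  linarith
end

section
/- Let 𝕎 = ⋃_{i=0}^{J−1} 𝕎_i ⊆ [−1/2, 1/2]² be a cubic multiband set consisting of J ≥ 1 pairwise disjoint closed rectangles. Then for all M, N ≥ 2 the eigenvalues of B_{(M,N),𝕎} satisfy Σ_{p=0}^{MN−1} λ_{(M,N),𝕎}^{(p)}·(1 − λ_{(M,N),𝕎}^{(p)}) ≤ (4MJ/π²)·(3 + log N) + (4NJ/π²)·(3 + log M). -/
open MeasureTheory Matrix Real Set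

/-- The closed rectangle `[f0 − W0, f0 + W0] × [f1 − W1, f1 + W1] ⊆ ℝ²`. -/
def rect2 (f0 f1 W0 W1 : ℝ) : Set (ℝ × ℝ) :=
  Set.Icc (f0 - W0) (f0 + W0) ×ˢ Set.Icc (f1 - W1) (f1 + W1)


noncomputable def vK (x : ℝ) (d : ℤ) : ℝ :=
  if d = 0 then x ^ 2 else Real.sin (π * d * x) ^ 2 / (π * d) ^ 2

lemma vK_neg (x : ℝ) (d : ℤ) : vK x (-d) = vK x d := by
  unfold vK
  by_cases h : d = 0
  · simp [h]
  · have h2 : -d ≠ 0 := by simpa using h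
    rw [if_neg h, if_neg h2]
    push_cast
    rw [show π * -(d : ℝ) * x = -(π * d * x) by ring, Real.sin_neg]
    ring

lemma vK_nonneg (x : ℝ) (d : ℤ) : 0 ≤ vK x d := by
  unfold vK; split_ifs <;> positivity

lemma vK_succ_le (x : ℝ) (k : ℕ) : vK x ((k : ℤ) + 1) ≤ 1 / π ^ 2 * (((k + 1 : ℕ) : ℝ) ^ 2)⁻¹ := by
  unfold vK
  rw [if_neg (by omega)]
  push_cast
  rw [mul_pow, div_eq_mul_inv, mul_inv, ← mul_assoc]
  have := Real.sin_sq_le_one (π * (k + 1) * x)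
  rw [one_div]
  gcongr
  exact mul_le_of_le_one_left (by positivity) this

lemma vK_hasSum (x : ℝ) (hx : x ∈ Icc (0 : ℝ) 1) :
    HasSum (fun k : ℕ => vK x ((k : ℤ) + 1)) ((x - x ^ 2) / 2) := by
  have h1 := hasSum_one_div_nat_pow_mul_cos (k := 1) one_ne_zero hx
  have h2 := hasSum_zeta_two
  have h3 := (h2.sub h1).mul_left (1 / (2 * π ^ 2))
  have hB : (Polynomial.map (algebraMap ℚ ℝ) (Polynomial.bernoulli (2 * 1))).eval x
      = x ^ 2 - x + 1 / 6 := by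
    rw [Polynomial.bernoulli]
    simp [Finset.sum_range_succ, bernoulli_eq_bernoulli'_of_ne_one, bernoulli_one]
    ring
  rw [hB] at h3
  have h4 := (hasSum_nat_add_iff' 1).mpr h3
  convert! h4 using 1
  · ext k
    unfold vK
    rw [if_neg (by omega)]
    have h6 : Real.cos (2 * π * ((k : ℝ) + 1) * x)
        = 1 - 2 * Real.sin (π * ((k : ℝ) + 1) * x) ^ 2 := by
      rw [show 2 * π * ((k : ℝ) + 1) * x = 2 * (π * ((k : ℝ) + 1) * x) by ring, Real.cos_two_mul]
      linarith [Real.sin_sq_add_cos_sq (π * ((k : ℝ) + 1) * x)]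
    push_cast
    rw [h6]
    have : (k : ℝ) + 1 ≠ 0 := by positivity
    field_simp
    ring
  · simp
    field_simp
    ring

lemma vK_tail (x : ℝ) (hx : x ∈ Icc (0 : ℝ) 1) (m : ℕ) :
    0 ≤ x - x ^ 2 - 2 * ∑ k ∈ Finset.range m, vK x ((k : ℤ) + 1) ∧
    x - x ^ 2 - 2 * ∑ k ∈ Finset.range m, vK x ((k : ℤ) + 1) ≤ 4 / π ^ 2 * ((m : ℝ) + 1)⁻¹ := by
  have h := vK_hasSum x hx
  have h1 := sum_le_hasSum (Finset.range m) (fun k _ => vK_nonneg x ((k : ℤ) + 1)) h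
  refine ⟨by linarith, ?_⟩
  have h2 := (hasSum_nat_add_iff' m).mpr h
  have h3 : (x - x ^ 2) / 2 - ∑ k ∈ Finset.range m, vK x ((k : ℤ) + 1)
      ≤ 1 / π ^ 2 * (2 / ((m : ℝ) + 1)) := by
    refine h2.tsum_eq ▸ Real.tsum_le_of_sum_range_le (fun n => vK_nonneg _ _) (fun n => ?_)
    calc ∑ i ∈ Finset.range n, vK x (((i + m : ℕ) : ℤ) + 1)
        ≤ ∑ i ∈ Finset.range n, 1 / π ^ 2 * (((i + m + 1 : ℕ) : ℝ) ^ 2)⁻¹ :=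
          Finset.sum_le_sum fun i _ => vK_succ_le x (i + m)
      _ = 1 / π ^ 2 * ∑ i ∈ Finset.Ioo m (n + m + 1), ((i : ℝ) ^ 2)⁻¹ := by
          rw [← Finset.mul_sum]
          congr 1
          rw [← Finset.Ico_add_one_left_eq_Ioo, Finset.sum_Ico_eq_sum_range]
          rw [show n + m + 1 - (m + 1) = n by omega]
          refine Finset.sum_congr rfl fun i _ => ?_
          congr 3
          omega
      _ ≤ _ := by
          gcongr
          exact sum_Ioo_inv_sq_le m (n + m + 1)
  calc _ = 2 * ((x - x ^ 2) / 2 - ∑ k ∈ Finset.range m, vK x ((k : ℤ) + 1)) := by ring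
    _ ≤ 2 * (1 / π ^ 2 * (2 / ((m : ℝ) + 1))) := by linarith
    _ = _ := by ring

noncomputable def tK (x : ℝ) (M : ℕ) : ℝ :=
  ∑ m ∈ Finset.range M, ∑ p ∈ Finset.range M, vK x ((m : ℤ) - p)

lemma tK_succ (x : ℝ) (M : ℕ) :
    tK x (M + 1) = tK x M + x ^ 2 + 2 * ∑ k ∈ Finset.range M, vK x ((k : ℤ) + 1) := by
  unfold tK
  rw [Finset.sum_range_succ]
  simp_rw [Finset.sum_range_succ _ M]
  rw [Finset.sum_add_distrib]
  have h1 : ∑ p ∈ Finset.range M, vK x ((M : ℤ) - p)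
      = ∑ k ∈ Finset.range M, vK x ((k : ℤ) + 1) := by
    rw [← Finset.sum_range_reflect]
    refine Finset.sum_congr rfl fun k hk => ?_
    have := Finset.mem_range.mp hk
    congr 1
    omega
  have h2 : ∑ p ∈ Finset.range M, vK x ((p : ℤ) - M)
      = ∑ k ∈ Finset.range M, vK x ((k : ℤ) + 1) := by
    rw [← h1]
    refine Finset.sum_congr rfl fun k hk => ?_
    rw [← vK_neg, neg_sub]
  rw [h1, h2]
  have : vK x ((M : ℤ) - M) = x ^ 2 := by simp [vK]
  rw [this]; ring

lemma tK_bound (x : ℝ) (hx : x ∈ Icc (0 : ℝ) 1) (M : ℕ) :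
    0 ≤ x * M - tK x M ∧ x * M - tK x M ≤ 4 / π ^ 2 * (harmonic M : ℝ) := by
  induction M with
  | zero => simp [tK]
  | succ M ih =>
    have h := vK_tail x hx M
    rw [tK_succ, harmonic_succ]
    push_cast
    constructor
    · linarith [h.1, ih.1]
    · rw [mul_add]; linarith [h.2, ih.2]

lemma tK_nonneg (x : ℝ) (M : ℕ) : 0 ≤ tK x M :=
  Finset.sum_nonneg fun _ _ => Finset.sum_nonneg fun _ _ => vK_nonneg _ _

lemma tK_log (x : ℝ) (hx : x ∈ Icc (0 : ℝ) 1) (M : ℕ) :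
    x * M - tK x M ≤ 4 / π ^ 2 * (3 + Real.log M) := by
  refine (tK_bound x hx M).2.trans ?_
  gcongr
  linarith [harmonic_le_one_add_log M]

lemma prod_bound (x y : ℝ) (hx : x ∈ Icc (0 : ℝ) 1) (hy : y ∈ Icc (0 : ℝ) 1) (M N : ℕ)
    (hM : 2 ≤ M) (hN : 2 ≤ N) :
    (x * M) * (y * N) - tK x M * tK y N ≤
      (4 * (M : ℝ) / π ^ 2) * (3 + Real.log N) + (4 * (N : ℝ) / π ^ 2) * (3 + Real.log M) := by
  have hlM : 0 ≤ Real.log M := Real.log_natCast_nonneg M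
  have hlN : 0 ≤ Real.log N := Real.log_natCast_nonneg N
  have a := tK_log x hx M
  have b := tK_log y hy N
  have a0 := (tK_bound x hx M).1
  have b0 := (tK_bound y hy N).1
  have hxM : x * M ≤ M := mul_le_of_le_one_left (by positivity) hx.2
  have hyN : y * N ≤ N := mul_le_of_le_one_left (by positivity) hy.2
  have e1 : (x * M - tK x M) * (y * N) ≤ 4 / π ^ 2 * (3 + Real.log M) * N :=
    mul_le_mul a hyN (mul_nonneg hy.1 (by positivity)) (by positivity)
  have e2 : tK x M * (y * N - tK y N) ≤ M * (4 / π ^ 2 * (3 + Real.log N)) :=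
    mul_le_mul (by linarith) b b0 (by positivity)
  calc _ = (x * M - tK x M) * (y * N) + tK x M * (y * N - tK y N) := by ring
    _ ≤ _ := add_le_add e1 e2
    _ = _ := by ring

noncomputable def eK (f W : ℝ) (d : ℤ) : ℂ :=
  ∫ x in Set.Icc (f - W) (f + W), Complex.exp (2 * (π : ℂ) * Complex.I * ((x : ℂ) * (d : ℂ)))

lemma eK_normSq (f W : ℝ) (hW : 0 < W) (d : ℤ) : ‖eK f W d‖ ^ 2 = vK (2 * W) d := by
  unfold eK vK
  rw [integral_Icc_eq_integral_Ioc, ← intervalIntegral.integral_of_le (by linarith)]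
  split_ifs with h
  · subst h
    have : ((W : ℂ) + W) = ((2 * W : ℝ) : ℂ) := by push_cast; ring
    simp [this]
    simp [mul_pow]
  · have hd : (d : ℂ) ≠ 0 := by exact_mod_cast h
    have hpi : (π : ℂ) ≠ 0 := by exact_mod_cast Real.pi_ne_zero
    have hc : 2 * (π : ℂ) * Complex.I * d ≠ 0 := by
      simp [hd, hpi]
    have h1 : ∀ x : ℝ, Complex.exp (2 * (π : ℂ) * Complex.I * ((x : ℂ) * (d : ℂ)))
        = Complex.exp ((2 * (π : ℂ) * Complex.I * d) * x) := fun x => by congr 1; ring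
    simp_rw [h1]
    rw [integral_exp_mul_complex hc]
    have h2 : (Complex.exp (2 * (π : ℂ) * Complex.I * d * ((f + W : ℝ) : ℂ)) -
        Complex.exp (2 * (π : ℂ) * Complex.I * d * ((f - W : ℝ) : ℂ))) / (2 * (π : ℂ) * Complex.I * d)
        = Complex.exp (((2 * π * d * f : ℝ) : ℂ) * Complex.I) *
          ((Real.sin (π * d * (2 * W)) / (π * d) : ℝ) : ℂ) := by
      have e1 : 2 * (π : ℂ) * Complex.I * d * ((f + W : ℝ) : ℂ)
          = ((2 * π * d * f : ℝ) : ℂ) * Complex.I + ((π * d * (2 * W) : ℝ) : ℂ) * Complex.I := by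
        push_cast; ring
      have e2 : 2 * (π : ℂ) * Complex.I * d * ((f - W : ℝ) : ℂ)
          = ((2 * π * d * f : ℝ) : ℂ) * Complex.I + -((π * d * (2 * W) : ℝ) : ℂ) * Complex.I := by
        push_cast; ring
      rw [e1, e2, Complex.exp_add, Complex.exp_add, Complex.ofReal_div, Complex.ofReal_sin,
        Complex.sin]
      push_cast
      have hI := Complex.I_ne_zero
      field_simp
      rw [Complex.I_sq]
      ring
    rw [h2, norm_mul, Complex.norm_exp_ofReal_mul_I, one_mul, Complex.norm_real, Real.norm_eq_abs,
      sq_abs, div_pow]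

lemma prolate2D_rect_apply (M N : ℕ) (f0 f1 W0 W1 : ℝ) (i j : Fin M × Fin N) :
    prolate2D M N (rect2 f0 f1 W0 W1) i j =
      eK f0 W0 ((i.1 : ℤ) - (j.1 : ℤ)) * eK f1 W1 ((i.2 : ℤ) - (j.2 : ℤ)) := by
  unfold prolate2D rect2 eK
  rw [Measure.volume_eq_prod, ← setIntegral_prod_mul]
  congr 1
  ext z
  rw [← Complex.exp_add]
  congr 1
  push_cast
  ring

lemma eK_zero (f W : ℝ) (hW : 0 < W) : eK f W 0 = ((2 * W : ℝ) : ℂ) := by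
  unfold eK
  rw [integral_Icc_eq_integral_Ioc, ← intervalIntegral.integral_of_le (by linarith)]
  simp
  ring

lemma trace_rect (M N : ℕ) (f0 f1 W0 W1 : ℝ) (h0 : 0 < W0) (h1 : 0 < W1) :
    (prolate2D M N (rect2 f0 f1 W0 W1)).trace.re = (2 * W0 * M) * (2 * W1 * N) := by
  unfold Matrix.trace
  simp only [Matrix.diag, prolate2D_rect_apply, sub_self, eK_zero _ _ h0, eK_zero _ _ h1]
  rw [← Complex.ofReal_mul]
  simp
  ring

lemma sumsq_rect (M N : ℕ) (f0 f1 W0 W1 : ℝ) (h0 : 0 < W0) (h1 : 0 < W1) :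
    ∑ i, ∑ j, ‖prolate2D M N (rect2 f0 f1 W0 W1) i j‖ ^ 2 = tK (2 * W0) M * tK (2 * W1) N := by
  simp only [prolate2D_rect_apply, norm_mul, mul_pow, eK_normSq _ _ h0, eK_normSq _ _ h1]
  unfold tK
  simp only [Finset.sum_range, Fintype.sum_prod_type, Finset.sum_mul_sum]

lemma herm_trace_mul_self {n : Type*} [Fintype n] {A : Matrix n n ℂ} (hA : A.IsHermitian) :
    (A * A).trace.re = ∑ i, ∑ j, ‖A i j‖ ^ 2 := by
  simp only [Matrix.trace, Matrix.diag, Matrix.mul_apply, Complex.re_sum]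
  refine Finset.sum_congr rfl fun i _ => Finset.sum_congr rfl fun j _ => ?_
  rw [← hA.apply j i]
  have := Complex.mul_conj (A i j)
  rw [Complex.star_def, this, Complex.ofReal_re, Complex.normSq_eq_norm_sq]

lemma herm_eig {n : Type*} [Fintype n] [DecidableEq n] {A : Matrix n n ℂ} (hA : A.IsHermitian) :
    ∑ i, hA.eigenvalues i * (1 - hA.eigenvalues i) = A.trace.re - (A * A).trace.re := by
  have h1 : A.trace.re = ∑ i, hA.eigenvalues i := by
    rw [hA.trace_eq_sum_eigenvalues]; simp
  have h2 : (A * A).trace = ∑ i, (hA.eigenvalues i : ℂ) * hA.eigenvalues i := by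
    conv_lhs => rw [hA.spectral_theorem, ← map_mul, Unitary.conjStarAlgAut_apply,
      Matrix.trace_mul_comm, ← mul_assoc]
    simp [Matrix.trace]
  rw [h1, h2, Complex.re_sum, ← Finset.sum_sub_distrib]
  refine Finset.sum_congr rfl fun i _ => ?_
  rw [← Complex.ofReal_mul, Complex.ofReal_re]
  ring

section

open scoped ComplexOrder MatrixOrder

lemma posSemidef_trace_mul {n : Type*} [Fintype n] [DecidableEq n] {A B : Matrix n n ℂ}
    (hA : A.PosSemidef) (hB : B.PosSemidef) : 0 ≤ (A * B).trace.re := by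
  obtain ⟨C, rfl⟩ := CStarAlgebra.nonneg_iff_eq_star_mul_self.mp hA.nonneg
  rw [mul_assoc, Matrix.trace_mul_comm, Matrix.star_eq_conjTranspose]
  exact (Complex.nonneg_iff.mp (hB.mul_mul_conjTranspose_same C).trace_nonneg).1

noncomputable def pK {M N : ℕ} (z : ℝ × ℝ) (i : Fin M × Fin N) : ℂ :=
  Complex.exp (2 * (π : ℂ) * Complex.I *
      ((z.1 : ℂ) * ((i.1 : ℕ) : ℂ) + (z.2 : ℂ) * ((i.2 : ℕ) : ℂ)))

lemma pK_mul {M N : ℕ} (z : ℝ × ℝ) (i j : Fin M × Fin N) :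
    Complex.exp (2 * (Real.pi : ℂ) * Complex.I *
      ((z.1 : ℂ) * (((i.1 : ℕ) : ℂ) - ((j.1 : ℕ) : ℂ)) +
       (z.2 : ℂ) * (((i.2 : ℕ) : ℂ) - ((j.2 : ℕ) : ℂ)))) = pK z i * star (pK z j) := by
  unfold pK
  rw [Complex.star_def, ← Complex.exp_conj, ← Complex.exp_add]
  congr 1
  simp [Complex.conj_ofNat]
  ring

lemma prolate2D_integrable {M N : ℕ} {S : Set (ℝ × ℝ)} (hS : IsCompact S) (i j : Fin M × Fin N) :
    IntegrableOn (fun z : ℝ × ℝ => Complex.exp (2 * (Real.pi : ℂ) * Complex.I *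
      ((z.1 : ℂ) * (((i.1 : ℕ) : ℂ) - ((j.1 : ℕ) : ℂ)) +
       (z.2 : ℂ) * (((i.2 : ℕ) : ℂ) - ((j.2 : ℕ) : ℂ))))) S := by
  apply ContinuousOn.integrableOn_compact hS
  fun_prop

lemma prolate2D_posSemidef (M N : ℕ) {S : Set (ℝ × ℝ)} (hS : IsCompact S) :
    (prolate2D M N S).PosSemidef := by
  refine Matrix.PosSemidef.of_dotProduct_mulVec_nonneg ?_ fun x => ?_
  · ext i j
    rw [Matrix.conjTranspose_apply]
    unfold prolate2D
    rw [Complex.star_def, ← integral_conj]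
    congr 1
    ext z
    rw [pK_mul, pK_mul]
    simp [mul_comm]
  · have h : star x ⬝ᵥ (prolate2D M N S *ᵥ x) =
        ∫ z in S, ((‖∑ i, star (x i) * pK z i‖ ^ 2 : ℝ) : ℂ) := by
      have e : ∀ z : ℝ × ℝ, ((‖∑ i, star (x i) * pK z i‖ ^ 2 : ℝ) : ℂ) =
          ∑ i, ∑ j, star (x i) * (Complex.exp (2 * (Real.pi : ℂ) * Complex.I *
            ((z.1 : ℂ) * (((i.1 : ℕ) : ℂ) - ((j.1 : ℕ) : ℂ)) +
             (z.2 : ℂ) * (((i.2 : ℕ) : ℂ) - ((j.2 : ℕ) : ℂ)))) * x j) := by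
        intro z
        rw [← Complex.normSq_eq_norm_sq, ← Complex.mul_conj, map_sum, Finset.sum_mul_sum]
        refine Finset.sum_congr rfl fun i _ => Finset.sum_congr rfl fun j _ => ?_
        rw [pK_mul]
        simp
        ring
      simp_rw [e]
      rw [integral_finsetSum]
      · simp only [dotProduct, mulVec, Finset.mul_sum]
        refine Finset.sum_congr rfl fun i _ => ?_
        rw [integral_finsetSum]
        · refine Finset.sum_congr rfl fun j _ => ?_
          rw [integral_const_mul, integral_mul_const]
          rfl
        · exact fun j _ => ((prolate2D_integrable hS i j).mul_const _).const_mul _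
      · exact fun i _ => integrable_finsetSum _ fun j _ =>
          ((prolate2D_integrable hS i j).mul_const _).const_mul _
    rw [h, integral_complex_ofReal, Complex.zero_le_real]
    exact integral_nonneg fun z => by positivity

lemma rect2_compact (f0 f1 W0 W1 : ℝ) : IsCompact (rect2 f0 f1 W0 W1) :=
  isCompact_Icc.prod isCompact_Icc

lemma rect2_herm (M N : ℕ) (f0 f1 W0 W1 : ℝ) :
    (prolate2D M N (rect2 f0 f1 W0 W1)).IsHermitian :=
  (prolate2D_posSemidef M N (rect2_compact _ _ _ _)).1

lemma rect2_trace_mul (M N : ℕ) (f0 f1 W0 W1 g0 g1 V0 V1 : ℝ) :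
    0 ≤ (prolate2D M N (rect2 f0 f1 W0 W1) * prolate2D M N (rect2 g0 g1 V0 V1)).trace.re :=
  posSemidef_trace_mul (prolate2D_posSemidef M N (rect2_compact _ _ _ _))
    (prolate2D_posSemidef M N (rect2_compact _ _ _ _))

end

theorem cubic_multiband_eigenvalue_transition_sum
    (J : ℕ) (hJ : 1 ≤ J) (f0 f1 W0 W1 : Fin J → ℝ)
    (hW0 : ∀ i, W0 i ∈ Set.Ioo (0 : ℝ) (1 / 2)) (hW1 : ∀ i, W1 i ∈ Set.Ioo (0 : ℝ) (1 / 2))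
    (hsub : ∀ i, rect2 (f0 i) (f1 i) (W0 i) (W1 i) ⊆
      Set.Icc (-(1 / 2) : ℝ) (1 / 2) ×ˢ Set.Icc (-(1 / 2) : ℝ) (1 / 2))
    (hdisj : ∀ i j, i ≠ j →
      Disjoint (rect2 (f0 i) (f1 i) (W0 i) (W1 i)) (rect2 (f0 j) (f1 j) (W0 j) (W1 j)))
    (M N : ℕ) (hM : 2 ≤ M) (hN : 2 ≤ N)
    (hA : (prolate2D M N (⋃ i, rect2 (f0 i) (f1 i) (W0 i) (W1 i))).IsHermitian)
    (μ : Fin (M * N) → ℝ) (hμ : Antitone μ)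
    (hperm : ∃ e : (Fin M × Fin N) ≃ Fin (M * N), hA.eigenvalues = μ ∘ e) :
    ∑ p : Fin (M * N), μ p * (1 - μ p) ≤
      (4 * (M : ℝ) * (J : ℝ) / Real.pi ^ 2) * (3 + Real.log (N : ℝ)) +
      (4 * (N : ℝ) * (J : ℝ) / Real.pi ^ 2) * (3 + Real.log (M : ℝ)) := by
  have hsum : prolate2D M N (⋃ i, rect2 (f0 i) (f1 i) (W0 i) (W1 i)) =
      ∑ i, prolate2D M N (rect2 (f0 i) (f1 i) (W0 i) (W1 i)) := by
    ext a b
    rw [Matrix.sum_apply]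
    exact integral_iUnion_fintype (fun i => (rect2_compact _ _ _ _).measurableSet)
      (fun i j hij => hdisj i j hij) (fun i => prolate2D_integrable (rect2_compact _ _ _ _) a b)
  obtain ⟨e, he⟩ := hperm
  have h1 : ∑ p, μ p * (1 - μ p) = ∑ i, hA.eigenvalues i * (1 - hA.eigenvalues i) := by
    rw [he]
    exact (Equiv.sum_comp e (fun p => μ p * (1 - μ p))).symm
  rw [h1, herm_eig hA, hsum]
  set B : Fin J → Matrix (Fin M × Fin N) (Fin M × Fin N) ℂ :=
    fun i => prolate2D M N (rect2 (f0 i) (f1 i) (W0 i) (W1 i)) with hB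
  have h2 : ∑ i, (B i * B i).trace.re ≤ ((∑ i, B i) * ∑ i, B i).trace.re := by
    rw [Finset.sum_mul_sum, Matrix.trace_sum, Complex.re_sum]
    refine Finset.sum_le_sum fun i _ => ?_
    rw [Matrix.trace_sum, Complex.re_sum]
    exact Finset.single_le_sum (f := fun j => (B i * B j).trace.re)
      (fun j _ => rect2_trace_mul M N _ _ _ _ _ _ _ _) (Finset.mem_univ i)
  have h3 : ∀ i, (B i).trace.re - (B i * B i).trace.re ≤
      (4 * (M : ℝ) / π ^ 2) * (3 + Real.log N) + (4 * (N : ℝ) / π ^ 2) * (3 + Real.log M) := by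
    intro i
    rw [herm_trace_mul_self (rect2_herm M N _ _ _ _ : (B i).IsHermitian)]
    simp only [hB]
    rw [trace_rect _ _ _ _ _ _ (hW0 i).1 (hW1 i).1, sumsq_rect _ _ _ _ _ _ (hW0 i).1 (hW1 i).1]
    exact prod_bound _ _ ⟨by linarith [(hW0 i).1], by linarith [(hW0 i).2]⟩
      ⟨by linarith [(hW1 i).1], by linarith [(hW1 i).2]⟩ M N hM hN
  have h4 := Finset.sum_le_sum fun i (_ : i ∈ Finset.univ) => h3 i
  rw [Finset.sum_sub_distrib, Finset.sum_const, Finset.card_univ, Fintype.card_fin,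
    nsmul_eq_mul] at h4
  rw [Matrix.trace_sum, Complex.re_sum]
  calc _ ≤ ∑ i, (B i).trace.re - ∑ i, (B i * B i).trace.re := by linarith
    _ ≤ _ := h4
    _ = _ := by ring
end
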